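/- arXiv:1301.5841 — 3 statements merged into one kernel-verified Lean document; each statement's English description precedes it below -/
import Mathlib

section
/- Every automorphism-invariant module M decomposes as M = X ⊕ Y, where X is quasi-injective, Y is square-free, X and Y are orthogonal, and X and Y are relatively injective. -/
universe u v w

section Defs

variable {R : Type u} [Ring R]

/-- `N` is an essential submodule of `M`. -/
def EssentialSub {M : Type v} [AddCommGroup M] [Module R M] (N : Submodule R M) : Prop :=
  ∀ K : Submodule R M, K ⊓ N = ⊥ → K = ⊥

/-- `N` is essential in `P` (both submodules of `M`, `N ≤ P`). -/
def EssentialIn {M : Type v} [AddCommGroup M] [Module R M] (N P : Submodule R M) : Prop :=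
  N ≤ P ∧ ∀ K : Submodule R M, K ≤ P → K ⊓ N = ⊥ → K = ⊥

/-- `N` is a closed submodule of `M`: it has no proper essential extension in `M`. -/
def ClosedSub {M : Type v} [AddCommGroup M] [Module R M] (N : Submodule R M) : Prop :=
  ∀ P : Submodule R M, EssentialIn N P → N = P

/-- `i : M →ₗ[R] E` realizes `E` as an injective hull of `M`. -/
structure IsInjectiveHull {M : Type v} {E : Type w} [AddCommGroup M] [Module R M]
    [AddCommGroup E] [Module R E] (i : M →ₗ[R] E) : Prop where
  inj : Function.Injective i
  injE : Module.Injective R E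
  ess : EssentialSub (LinearMap.range i)

/-- `M` is invariant under every automorphism of the hull `E` given by `i`. -/
def HullAutInv {M : Type v} {E : Type w} [AddCommGroup M] [Module R M]
    [AddCommGroup E] [Module R E] (i : M →ₗ[R] E) : Prop :=
  ∀ g : E ≃ₗ[R] E, ∀ m : M, g (i m) ∈ LinearMap.range i

end Defs

/-- `M` is automorphism-invariant: invariant under all automorphisms of its injective hull. -/
def AutInvariant (R : Type u) [Ring R] (M : Type v) [AddCommGroup M] [Module R M] : Prop :=
  ∀ (E : Type v) [AddCommGroup E] [Module R E] (i : M →ₗ[R] E),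
    IsInjectiveHull i → HullAutInv i

/-- Every monomorphism from a submodule of `M` into `M` extends to an endomorphism of `M`. -/
def PseudoInjective (R : Type u) [Ring R] (M : Type v) [AddCommGroup M] [Module R M] : Prop :=
  ∀ (A : Submodule R M) (f : A →ₗ[R] M), Function.Injective f →
    ∃ g : M →ₗ[R] M, ∀ a : A, g a = f a

/-- Every homomorphism from a submodule of `M` into `M` extends to an endomorphism of `M`. -/
def QuasiInjective (R : Type u) [Ring R] (M : Type v) [AddCommGroup M] [Module R M] : Prop :=
  ∀ (A : Submodule R M) (f : A →ₗ[R] M), ∃ g : M →ₗ[R] M, ∀ a : A, g a = f a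

/-- `X` is `Y`-injective. -/
def RelInjective (R : Type u) [Ring R] (X : Type v) (Y : Type w) [AddCommGroup X] [Module R X]
    [AddCommGroup Y] [Module R Y] : Prop :=
  ∀ (A : Submodule R Y) (f : A →ₗ[R] X), ∃ g : Y →ₗ[R] X, ∀ a : A, g a = f a

/-- `M` contains no direct sum of two nonzero isomorphic submodules. -/
def SquareFreeMod (R : Type u) [Ring R] (M : Type v) [AddCommGroup M] [Module R M] : Prop :=
  ∀ (A B : Submodule R M), A ⊓ B = ⊥ → Nonempty (A ≃ₗ[R] B) → A = ⊥

/-- `X` and `Y` have no nonzero isomorphic submodules. -/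
def OrthogonalMod (R : Type u) [Ring R] (X : Type v) (Y : Type w) [AddCommGroup X] [Module R X]
    [AddCommGroup Y] [Module R Y] : Prop :=
  ∀ (A : Submodule R X) (B : Submodule R Y), Nonempty (A ≃ₗ[R] B) → A = ⊥

/-- No nonzero element of `M` is annihilated by an essential (right) ideal of `R`. -/
def NonsingularMod (R : Type u) [Ring R] (M : Type v) [AddCommGroup M] [Module R M] : Prop :=
  ∀ m : M, EssentialSub (LinearMap.ker (LinearMap.toSpanSingleton R M m)) → m = 0


namespace AutInvProof

section
variable {R : Type u} [Ring R] {E : Type w} [AddCommGroup E] [Module R E]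

theorem ext_map (hE : Module.Injective R E) {T : Type*} [AddCommGroup T] [Module R T]
    (j k : T →ₗ[R] E) (hj : ∀ t, j t = 0 → t = 0) :
    ∃ h : E →ₗ[R] E, ∀ t, h (j t) = k t := by
  have hj' : Function.Injective j := (injective_iff_map_eq_zero j).2 hj
  let eqv := LinearEquiv.ofInjective j hj'
  obtain ⟨h, hh⟩ := hE.out (LinearMap.range j).subtype (Submodule.subtype_injective _)
    (k ∘ₗ eqv.symm.toLinearMap)
  refine ⟨h, fun t => ?_⟩
  have := hh (eqv t)
  simpa [eqv] using this

/-- Zorn for properties of submodules tested on pairs of elements. -/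
theorem zorn_pair {F : Type*} [AddCommGroup F] [Module R F] (P : F → F → Prop)
    (G0 : Submodule R F) (h0 : ∀ z ∈ G0, ∀ z' ∈ G0, P z z') :
    ∃ G : Submodule R F, G0 ≤ G ∧ (∀ z ∈ G, ∀ z' ∈ G, P z z') ∧
      ∀ G' : Submodule R F, G ≤ G' → (∀ z ∈ G', ∀ z' ∈ G', P z z') → G' ≤ G := by
  obtain ⟨m, hm, hmax⟩ := zorn_le_nonempty₀
    {G : Submodule R F | ∀ z ∈ G, ∀ z' ∈ G, P z z'} (by
      intro c hc hchain y hy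
      refine ⟨sSup c, ?_, fun z hz => le_sSup hz⟩
      intro z hz z' hz'
      have hd : DirectedOn (· ≤ ·) c := hchain.directedOn
      rw [Submodule.mem_sSup_of_directed ⟨y, hy⟩ hd] at hz hz'
      obtain ⟨s, hs, hzs⟩ := hz
      obtain ⟨t, ht, hzt⟩ := hz'
      obtain ⟨r, hr, h1, h2⟩ := hd s hs t ht
      exact hc hr z (h1 hzs) z' (h2 hzt)) G0 h0
  exact ⟨m, hm, hmax.prop, fun G' hG hP => hmax.le_of_ge hP hG⟩

/-- closed submodules of injectives are summands -/
theorem closed_proj (hE : Module.Injective R E) (A B : Submodule R E)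
    (hAB : ∀ x ∈ A, x ∈ B → x = 0) (hA : ClosedSub A) :
    ∃ a : E →ₗ[R] E, (∀ x, a x ∈ A) ∧ (∀ x ∈ A, a x = x) ∧ ∀ x ∈ B, a x = 0 := by
  obtain ⟨K, hBK, hK, hmax⟩ := zorn_pair (fun z _ : E => z ∈ A → z = 0) B
    (fun z hz _ _ hzA => hAB z hzA hz)
  have hK' : ∀ z ∈ K, z ∈ A → z = 0 := fun z hz => hK z hz z hz
  obtain ⟨t, ht⟩ := ext_map hE
    (A.subtype.coprod K.subtype : (A × K) →ₗ[R] E) (A.subtype ∘ₗ LinearMap.fst R A K) (by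
      rintro ⟨⟨x, hx⟩, ⟨k, hk⟩⟩ h
      simp only [LinearMap.coprod_apply, Submodule.subtype_apply] at h
      have hkA : k ∈ A := by
        rw [eq_neg_of_add_eq_zero_right h]; exact A.neg_mem hx
      have hk0 := hK' k hk hkA
      subst hk0
      have hx0 : x = 0 := by simpa using h
      subst hx0
      rfl)
  have htA : ∀ x ∈ A, t x = x := fun x hx => by simpa using ht (⟨x, hx⟩, 0)
  have htK : ∀ x ∈ K, t x = 0 := fun x hx => by simpa using ht (0, ⟨x, hx⟩)
  have hcl : A = LinearMap.range t := by
    apply hA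
    refine ⟨fun x hx => ⟨x, htA x hx⟩, fun L hL hLA => ?_⟩
    have h1 : Submodule.comap t L ≤ K := by
      apply hmax
      · intro x hx
        simp [htK x hx]
      · intro z hz _ _ hzA
        have : z ∈ L ⊓ A := ⟨by simpa [htA z hzA] using hz, hzA⟩
        rw [hLA] at this
        simpa using this
    rw [eq_bot_iff]
    intro l hl
    obtain ⟨x, rfl⟩ := hL hl
    simpa using htK x (h1 hl)
  refine ⟨t, fun x => ?_, htA, fun x hx => htK x (hBK hx)⟩
  rw [hcl]; exact ⟨x, rfl⟩

def Cond (z z' : E × E) : Prop := z.1 = z'.2 → z = 0 ∧ z' = 0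

def BI (H : Submodule R (E × E)) : Prop := ∀ z ∈ H, (z.1 = 0 → z = 0) ∧ (z.2 = 0 → z = 0)

theorem BI_of_cond {G : Submodule R (E × E)} (h : ∀ z ∈ G, ∀ z' ∈ G, Cond z z') : BI G := by
  intro z hz
  exact ⟨fun h1 => (h z hz 0 G.zero_mem (by simpa using h1)).1,
    fun h1 => (h 0 G.zero_mem z hz (by simpa using h1.symm)).2⟩

def Fst (G : Submodule R (E × E)) : Submodule R E := G.map (LinearMap.fst R E E)
def Snd (G : Submodule R (E × E)) : Submodule R E := G.map (LinearMap.snd R E E)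

theorem ext_fst (hE : Module.Injective R E) {G : Submodule R (E × E)} (hG : BI G) :
    ∃ h : E →ₗ[R] E, ∀ z ∈ G, h z.1 = z.2 := by
  obtain ⟨h, hh⟩ := ext_map hE (LinearMap.fst R E E ∘ₗ G.subtype)
    (LinearMap.snd R E E ∘ₗ G.subtype) (by
      rintro ⟨z, hz⟩ h
      exact Subtype.ext ((hG z hz).1 (by simpa using h)))
  exact ⟨h, fun z hz => by simpa using hh ⟨z, hz⟩⟩

theorem ext_snd (hE : Module.Injective R E) {G : Submodule R (E × E)} (hG : BI G) :
    ∃ h : E →ₗ[R] E, ∀ z ∈ G, h z.2 = z.1 := by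
  obtain ⟨h, hh⟩ := ext_map hE (LinearMap.snd R E E ∘ₗ G.subtype)
    (LinearMap.fst R E E ∘ₗ G.subtype) (by
      rintro ⟨z, hz⟩ h
      exact Subtype.ext ((hG z hz).2 (by simpa using h)))
  exact ⟨h, fun z hz => by simpa using hh ⟨z, hz⟩⟩

/-- a map injective on an essential submodule is injective -/
theorem ess_inj {A P : Submodule R E} (hP : EssentialIn A P) (h : E →ₗ[R] E)
    (hh : ∀ x ∈ A, h x = 0 → x = 0) : ∀ x ∈ P, h x = 0 → x = 0 := by
  have := hP.2 (P ⊓ LinearMap.ker h) inf_le_left (by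
    rw [eq_bot_iff]
    rintro x ⟨⟨_, hx⟩, hxA⟩
    exact hh x hxA hx)
  intro x hx h0
  have hx' : x ∈ P ⊓ LinearMap.ker h := ⟨hx, h0⟩
  rw [this] at hx'
  simpa using hx'

/-- key disjointness -/
theorem ess_disj {A P : Submodule R E} (hP : EssentialIn A P) (h : E →ₗ[R] E)
    (hh : ∀ x ∈ A, h x = 0 → x = 0) (hd : ∀ x ∈ A, h x ∈ A → x = 0) :
    ∀ x ∈ P, h x ∈ P → x = 0 := by
  have hinj := ess_inj hP h hh
  -- elements of `P` whose image lies in `A`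
  have s1 : ∀ x ∈ P, h x ∈ A → x = 0 := by
    have := hP.2 (P ⊓ A.comap h) inf_le_left (by
      rw [eq_bot_iff]
      rintro x ⟨⟨_, hx⟩, hxA⟩
      exact hd x hxA hx)
    intro x hx h0
    have hx' : x ∈ P ⊓ A.comap h := ⟨hx, h0⟩
    rw [this] at hx'
    simpa using hx'
  have := hP.2 (P ⊓ P.map h) inf_le_left (by
      rw [eq_bot_iff]
      rintro _ ⟨⟨_, x, hx, rfl⟩, hxA⟩
      simp [s1 x hx hxA])
  intro x hx h0
  have hx' : h x ∈ P ⊓ P.map h := ⟨h0, x, hx, rfl⟩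
  rw [this] at hx'
  exact hinj x hx (by simpa using hx')

theorem closed_fst (hE : Module.Injective R E) {G : Submodule R (E × E)}
    (hG : ∀ z ∈ G, ∀ z' ∈ G, Cond z z')
    (hmax : ∀ G' : Submodule R (E × E), G ≤ G' → (∀ z ∈ G', ∀ z' ∈ G', Cond z z') → G' ≤ G) :
    ClosedSub (Fst G) := by
  intro P hP
  obtain ⟨h, hh⟩ := ext_fst hE (BI_of_cond hG)
  have hi : ∀ x ∈ Fst G, h x = 0 → x = 0 := by
    rintro _ ⟨z, hz, rfl⟩ h0
    have := (BI_of_cond hG z hz).2 (by rw [← hh z hz]; exact h0)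
    simp [this]
  have hd : ∀ x ∈ Fst G, h x ∈ Fst G → x = 0 := by
    rintro _ ⟨z, hz, rfl⟩ ⟨z', hz', h0⟩
    have := (hG z' hz' z hz (by rw [← hh z hz]; exact h0)).2
    simp [this]
  have hinj := ess_inj hP h hi
  have hdis := ess_disj hP h hi hd
  have hle := hmax (P.map (LinearMap.prod LinearMap.id h)) (by
    intro z hz
    exact ⟨z.1, hP.1 ⟨z, hz, rfl⟩, Prod.ext rfl (hh z hz)⟩) (by
    rintro _ ⟨x, hx, rfl⟩ _ ⟨x', hx', rfl⟩ h0
    have h0 : x = h x' := h0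
    have h1 : x' = 0 := hdis x' hx' (h0 ▸ hx)
    subst h1
    have h2 : x = 0 := by simpa using h0
    subst h2
    simp)
  refine le_antisymm hP.1 fun x hx => ⟨(x, h x), hle ⟨x, hx, rfl⟩, rfl⟩

theorem closed_snd (hE : Module.Injective R E) {G : Submodule R (E × E)}
    (hG : ∀ z ∈ G, ∀ z' ∈ G, Cond z z')
    (hmax : ∀ G' : Submodule R (E × E), G ≤ G' → (∀ z ∈ G', ∀ z' ∈ G', Cond z z') → G' ≤ G) :
    ClosedSub (Snd G) := by
  intro P hP
  obtain ⟨h, hh⟩ := ext_snd hE (BI_of_cond hG)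
  have hi : ∀ x ∈ Snd G, h x = 0 → x = 0 := by
    rintro _ ⟨z, hz, rfl⟩ h0
    have := (BI_of_cond hG z hz).1 (by rw [← hh z hz]; exact h0)
    simp [this]
  have hd : ∀ x ∈ Snd G, h x ∈ Snd G → x = 0 := by
    rintro _ ⟨z, hz, rfl⟩ ⟨z', hz', h0⟩
    have := (hG z hz z' hz' (by rw [← hh z hz]; exact h0.symm)).1
    simp [this]
  have hinj := ess_inj hP h hi
  have hdis := ess_disj hP h hi hd
  have hle := hmax (P.map (LinearMap.prod h LinearMap.id)) (by
    intro z hz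
    exact ⟨z.2, hP.1 ⟨z, hz, rfl⟩, Prod.ext (hh z hz) rfl⟩) (by
    rintro _ ⟨x, hx, rfl⟩ _ ⟨x', hx', rfl⟩ h0
    have h0 : h x = x' := h0
    have h1 : x = 0 := hdis x hx (h0 ▸ hx')
    subst h1
    have h2 : x' = 0 := by simpa using h0.symm
    subst h2
    simp)
  refine le_antisymm hP.1 fun x hx => ⟨(h x, x), hle ⟨x, hx, rfl⟩, rfl⟩

def Orth (Y W : Submodule R E) : Prop :=
  ∀ H : Submodule R (E × E), (∀ z ∈ H, z.1 ∈ Y ∧ z.2 ∈ W) → BI H → H = ⊥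

theorem Orth.glue {Y P Q W : Submodule R E} (hP : Orth Y P) (hQ : Orth Y Q) (p : E →ₗ[R] E)
    (h1 : ∀ v ∈ W, p v = 0 → v ∈ P) (h2 : ∀ v ∈ W, p v ∈ Q) : Orth Y W := by
  intro H hH hB
  have hHP := hP (H ⊓ LinearMap.ker (p ∘ₗ LinearMap.snd R E E))
    (fun z hz => ⟨(hH z hz.1).1, h1 _ (hH z hz.1).2 hz.2⟩) (fun z hz => hB z hz.1)
  have hz0 : ∀ z ∈ H, p z.2 = 0 → z = 0 := by
    intro z hz h0
    have : z ∈ H ⊓ LinearMap.ker (p ∘ₗ LinearMap.snd R E E) := ⟨hz, h0⟩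
    rw [hHP] at this
    simpa using this
  have hHQ := hQ (H.map (LinearMap.prodMap LinearMap.id p)) (by
    rintro _ ⟨z, hz, rfl⟩
    exact ⟨(hH z hz).1, h2 _ (hH z hz).2⟩) (by
    rintro _ ⟨z, hz, rfl⟩
    refine ⟨fun h0 => ?_, fun h0 => ?_⟩
    · rw [(hB z hz).1 h0]; simp
    · rw [hz0 z hz h0]; simp)
  rw [eq_bot_iff]
  intro z hz
  have : (LinearMap.prodMap LinearMap.id p) z ∈ (⊥ : Submodule R (E × E)) :=
    hHQ ▸ ⟨z, hz, rfl⟩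
  have h3 : (LinearMap.prodMap LinearMap.id p) z = 0 := by simpa using this
  exact (hB z hz).1 (congrArg Prod.fst h3)

/-- first splitting -/
theorem split1 (hE : Module.Injective R E) :
    ∃ a b p q : E →ₗ[R] E,
      a * a = a ∧ b * b = b ∧ a * b = 0 ∧ b * a = 0 ∧
      q * b * p * a = a ∧ p * a * q * b = b ∧ b * p * a = p * a ∧ a * q * b = q * b ∧
      (∀ H : Submodule R (E × E),
        (∀ z ∈ H, (a z.1 = 0 ∧ b z.1 = 0) ∧ (a z.2 = 0 ∧ b z.2 = 0)) →
        (∀ z ∈ H, ∀ z' ∈ H, Cond z z') → H = ⊥) := by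
  obtain ⟨G, -, hG, hmax⟩ := zorn_pair (R := R) (Cond (E := E)) ⊥ (by
    intro z hz z' hz' _
    exact ⟨by simpa using hz, by simpa using hz'⟩)
  have hd : ∀ x ∈ Fst G, x ∈ Snd G → x = 0 := by
    rintro _ ⟨z, hz, rfl⟩ ⟨z', hz', h0⟩
    have := (hG z hz z' hz' h0.symm).1
    simp [this]
  obtain ⟨a, a1, a2, a3⟩ := closed_proj hE (Fst G) (Snd G) hd (closed_fst hE hG hmax)
  obtain ⟨b, b1, b2, b3⟩ := closed_proj hE (Snd G) (Fst G) (fun x h h' => hd x h' h)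
    (closed_snd hE hG hmax)
  obtain ⟨p, hp⟩ := ext_fst hE (BI_of_cond hG)
  obtain ⟨q, hq⟩ := ext_snd hE (BI_of_cond hG)
  have hp1 : ∀ x ∈ Fst G, p x ∈ Snd G ∧ q (p x) = x := by
    rintro _ ⟨z, hz, rfl⟩
    have h1 := hp z hz
    have h2 := hq z hz
    simp only [LinearMap.fst_apply]
    rw [h1, h2]
    exact ⟨⟨z, hz, rfl⟩, rfl⟩
  have hq1 : ∀ x ∈ Snd G, q x ∈ Fst G ∧ p (q x) = x := by
    rintro _ ⟨z, hz, rfl⟩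
    have h1 := hp z hz
    have h2 := hq z hz
    simp only [LinearMap.snd_apply]
    rw [h2, h1]
    exact ⟨⟨z, hz, rfl⟩, rfl⟩
  refine ⟨a, b, p, q, ?_, ?_, ?_, ?_, ?_, ?_, ?_, ?_, ?_⟩
  · ext x; exact a2 _ (a1 x)
  · ext x; exact b2 _ (b1 x)
  · ext x; exact a3 _ (b1 x)
  · ext x; exact b3 _ (a1 x)
  · ext x
    simp only [Module.End.mul_apply]
    rw [b2 _ (hp1 _ (a1 x)).1, (hp1 _ (a1 x)).2]
  · ext x
    simp only [Module.End.mul_apply]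
    rw [a2 _ (hq1 _ (b1 x)).1, (hq1 _ (b1 x)).2]
  · ext x
    exact b2 _ (hp1 _ (a1 x)).1
  · ext x
    exact a2 _ (hq1 _ (b1 x)).1
  · intro H hH hC
    have hle := hmax (G ⊔ H) le_sup_left (by
      intro z hz z' hz' h0
      obtain ⟨g, hg, k, hk, rfl⟩ := Submodule.mem_sup.1 hz
      obtain ⟨g', hg', k', hk', rfl⟩ := Submodule.mem_sup.1 hz'
      simp only [Prod.fst_add, Prod.snd_add] at h0
      have e1 := congrArg a h0
      have e2 := congrArg b h0
      have m1 : g.1 ∈ Fst G := ⟨g, hg, rfl⟩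
      have m2 : g'.2 ∈ Snd G := ⟨g', hg', rfl⟩
      rw [map_add, map_add, (hH k hk).1.1, (hH k' hk').2.1, a2 _ m1, a3 _ m2] at e1
      rw [map_add, map_add, (hH k hk).1.2, (hH k' hk').2.2, b3 _ m1, b2 _ m2] at e2
      simp only [add_zero] at e1 e2
      have f1 := (BI_of_cond hG g hg).1 e1
      have f2 := (BI_of_cond hG g' hg').2 e2.symm
      subst f1
      subst f2
      simp only [zero_add]
      exact hC k hk k' hk' (by simpa using h0))
    rw [eq_bot_iff]
    intro z hz
    have hzG : z ∈ G := hle (le_sup_right (a := G) hz)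
    have : a z.1 = z.1 := a2 _ ⟨z, hzG, rfl⟩
    exact (BI_of_cond hG z hzG).1 (by rw [← this, (hH z hz).1.1])

theorem split2 (hE : Module.Injective R E) :
    ∃ a b d p q r s : E →ₗ[R] E,
      a * a = a ∧ b * b = b ∧ d * d = d ∧ a * b = 0 ∧ b * a = 0 ∧ a * d = 0 ∧ d * a = 0 ∧
      b * d = 0 ∧ d * b = 0 ∧
      q * b * p * a = a ∧ p * a * q * b = b ∧ d * s * a * r * d = d ∧
      (∀ H : Submodule R (E × E),
        (∀ z ∈ H, (a + b + d) z.1 = 0 ∧ (a + b + d) z.2 = 0) →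
        (∀ z ∈ H, ∀ z' ∈ H, Cond z z') → H = ⊥) ∧
      Orth (LinearMap.ker (a + b + d)) (LinearMap.range (a + b + d)) := by
  obtain ⟨a, b, p, q, haa, hbb, hab, hba, hqp, hpq, hbpa, haqb, hsf⟩ := split1 (R := R) hE
  have Aaa : ∀ x, a (a x) = a x := fun x => LinearMap.congr_fun haa x
  have Abb : ∀ x, b (b x) = b x := fun x => LinearMap.congr_fun hbb x
  have Aab : ∀ x, a (b x) = 0 := fun x => LinearMap.congr_fun hab x
  have Aba : ∀ x, b (a x) = 0 := fun x => LinearMap.congr_fun hba x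
  have Aqp : ∀ x, q (b (p (a x))) = a x := fun x => LinearMap.congr_fun hqp x
  have Apq : ∀ x, p (a (q (b x))) = b x := fun x => LinearMap.congr_fun hpq x
  obtain ⟨G, -, hG', hmax⟩ := zorn_pair (R := R)
    (fun z _ : E × E => (a z.1 = 0 ∧ b z.1 = 0 ∧ a z.2 = z.2) ∧
      (z.1 = 0 → z = 0) ∧ (z.2 = 0 → z = 0)) ⊥ (by
    intro z hz z' hz'
    have : z = 0 := by simpa using hz
    subst this
    simp)
  have hG := fun z hz => hG' z hz z hz
  have hB : BI G := fun z hz => (hG z hz).2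
  obtain ⟨r, hr⟩ := ext_fst hE hB
  obtain ⟨s, hs⟩ := ext_snd hE hB
  have hcl : ClosedSub (Fst G) := by
    intro P hP
    let c : E →ₗ[R] E := LinearMap.id - a - b
    have cap : ∀ x, c x = x - a x - b x := fun x => rfl
    have cD : ∀ x ∈ Fst G, c x = x := by
      rintro _ ⟨z, hz, rfl⟩
      simp [cap, (hG z hz).1.1, (hG z hz).1.2.1]
    have c1 := ess_inj hP c (fun x hx h0 => by rw [← cD x hx, h0])
    have r1 := ess_inj hP (a ∘ₗ r) (by
      rintro _ ⟨z, hz, rfl⟩ h0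
      have h0 : a (r z.1) = 0 := h0
      rw [hr z hz, (hG z hz).1.2.2] at h0
      simp [(hG z hz).2.2 h0])
    have hle := hmax (P.map (LinearMap.prod c (a ∘ₗ r))) (by
      intro z hz
      have hm : z.1 ∈ Fst G := ⟨z, hz, rfl⟩
      refine ⟨z.1, hP.1 hm, Prod.ext (cD _ hm) ?_⟩
      simp [hr z hz, (hG z hz).1.2.2]) (by
      rintro _ ⟨x, hx, rfl⟩ _ _
      refine ⟨⟨?_, ?_, ?_⟩, fun h0 => ?_, fun h0 => ?_⟩
      · simp [cap, Aaa, Aab]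
      · simp [cap, Abb, Aba]
      · simp [Aaa]
      · rw [c1 x hx h0]; simp
      · rw [r1 x hx h0]; simp)
    refine le_antisymm hP.1 fun x hx => ?_
    have hcx : c x ∈ Fst G := ⟨_, hle ⟨x, hx, rfl⟩, rfl⟩
    have := c1 (x - c x) (P.sub_mem hx (hP.1 hcx)) (by rw [map_sub, cD _ hcx, sub_self])
    rw [sub_eq_zero.1 this]
    exact hcx
  obtain ⟨d, d1, d2, d3⟩ := closed_proj hE (Fst G) (LinearMap.range (a + b)) (by
    rintro _ ⟨z, hz, rfl⟩ ⟨x, hx⟩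
    have h1 := (hG z hz).1.1
    have h2 := (hG z hz).1.2.1
    have hx : a x + b x = z.1 := hx
    rw [← hx] at h1 h2
    simp only [map_add, Aaa, Abb, Aab, Aba, add_zero, zero_add] at h1 h2
    rw [h1, h2] at hx
    simpa using hx.symm) hcl
  have Aad : ∀ x, a (d x) = 0 := by
    intro x
    obtain ⟨z, hz, h⟩ := d1 x
    rw [← h]; exact (hG z hz).1.1
  have Abd : ∀ x, b (d x) = 0 := by
    intro x
    obtain ⟨z, hz, h⟩ := d1 x
    rw [← h]; exact (hG z hz).1.2.1
  have Ada : ∀ x, d (a x) = 0 := fun x => d3 _ ⟨a x, by simp [Aaa, Aba]⟩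
  have Adb : ∀ x, d (b x) = 0 := fun x => d3 _ ⟨b x, by simp [Abb, Aab]⟩
  have Add' : ∀ x, d (d x) = d x := fun x => d2 _ (d1 x)
  have kere : ∀ x, (a + b + d) x = 0 → a x = 0 ∧ b x = 0 ∧ d x = 0 := by
    intro x hx
    have hx : a x + b x + d x = 0 := hx
    have e1 := congrArg a hx
    have e2 := congrArg b hx
    have e3 := congrArg d hx
    simp only [map_add, Aaa, Abb, Aab, Aba, Aad, Abd, Ada, Adb, Add', add_zero, zero_add,
      map_zero] at e1 e2 e3
    exact ⟨e1, e2, e3⟩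
  have oDY : ∀ H : Submodule R (E × E), (∀ z ∈ H, d z.1 = z.1 ∧ (a + b + d) z.2 = 0) →
      BI H → H = ⊥ := by
    intro H hH hHB
    apply hsf H
    · intro z hz
      obtain ⟨h1, h2⟩ := hH z hz
      refine ⟨⟨?_, ?_⟩, (kere _ h2).1, (kere _ h2).2.1⟩
      · rw [← h1, Aad]
      · rw [← h1, Abd]
    · intro z hz z' hz' h0
      have h1 := (hH z hz).1
      rw [h0, (kere _ (hH z' hz').2).2.2] at h1
      exact ⟨(hHB z hz).1 (h0.trans h1.symm), (hHB z' hz').2 h1.symm⟩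
  have oYD : Orth (LinearMap.ker (a + b + d)) (LinearMap.range d) := by
    intro H hH hHB
    have := oDY (H.map (LinearMap.prod (LinearMap.snd R E E) (LinearMap.fst R E E))) (by
      rintro _ ⟨z, hz, rfl⟩
      obtain ⟨h1, x, hx⟩ := hH z hz
      refine ⟨?_, h1⟩
      change d z.2 = z.2
      rw [← hx, Add']) (by
      rintro _ ⟨z, hz, rfl⟩
      refine ⟨fun h0 => ?_, fun h0 => ?_⟩
      · rw [(hHB z hz).2 h0]; simp
      · rw [(hHB z hz).1 h0]; simp)
    rw [eq_bot_iff]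
    intro z hz
    have h2 : (LinearMap.prod (LinearMap.snd R E E) (LinearMap.fst R E E)) z ∈
      (⊥ : Submodule R (E × E)) := this ▸ ⟨z, hz, rfl⟩
    have h3 : (LinearMap.prod (LinearMap.snd R E E) (LinearMap.fst R E E)) z = 0 := by
      simpa using h2
    exact (hHB z hz).1 (congrArg Prod.snd h3)
  have oYA : Orth (LinearMap.ker (a + b + d)) (LinearMap.range a) := by
    intro H hH hHB
    -- the composite relation
    have key : ∀ g ∈ G, ∀ k ∈ H, g.2 = k.2 → g = 0 ∧ k = 0 := by
      let L : Submodule R (E × E) :=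
        { carrier := {w | ∃ v, (w.1, v) ∈ G ∧ (w.2, v) ∈ H}
          add_mem' := by
            rintro w w' ⟨v, h1, h2⟩ ⟨v', h1', h2'⟩
            exact ⟨v + v', G.add_mem h1 h1', H.add_mem h2 h2'⟩
          zero_mem' := ⟨0, G.zero_mem, H.zero_mem⟩
          smul_mem' := by
            rintro t w ⟨v, h1, h2⟩
            exact ⟨t • v, G.smul_mem t h1, H.smul_mem t h2⟩ }
      have hL := oDY L (by
        rintro w ⟨v, h1, h2⟩
        exact ⟨d2 _ ⟨_, h1, rfl⟩, (hH _ h2).1⟩) (by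
        rintro w ⟨v, h1, h2⟩
        refine ⟨fun h0 => ?_, fun h0 => ?_⟩
        · have e1 : v = 0 := congrArg Prod.snd ((hB _ h1).1 h0)
          have e2 : w.2 = 0 := congrArg Prod.fst ((hHB _ h2).2 e1)
          exact Prod.ext h0 e2
        · have e1 : v = 0 := congrArg Prod.snd ((hHB _ h2).1 h0)
          have e2 : w.1 = 0 := congrArg Prod.fst ((hB _ h1).2 e1)
          exact Prod.ext e2 h0)
      intro g hg k hk h0
      have : (g.1, k.1) ∈ L := ⟨g.2, hg, by rw [h0]; exact hk⟩
      rw [hL] at this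
      have h3 : (g.1, k.1) = (0 : E × E) := by simpa using this
      exact ⟨(hB g hg).1 (congrArg Prod.fst h3), (hHB k hk).1 (congrArg Prod.snd h3)⟩
    have hle := hmax (G ⊔ H) le_sup_left (by
      intro z hz _ _
      obtain ⟨g, hg, k, hk, rfl⟩ := Submodule.mem_sup.1 hz
      obtain ⟨hk1, x, hx⟩ := hH k hk
      have k1 := kere _ hk1
      have g1 := (hG g hg).1
      refine ⟨⟨?_, ?_, ?_⟩, fun h0 => ?_, fun h0 => ?_⟩
      · simp [k1.1, g1.1]
      · simp [k1.2.1, g1.2.1]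
      · simp [g1.2.2, ← hx, Aaa]
      · have h0 : g.1 + k.1 = 0 := h0
        have e := congrArg d h0
        rw [map_add, d2 g.1 ⟨g, hg, rfl⟩, k1.2.2, map_zero, add_zero] at e
        rw [e, zero_add] at h0
        rw [(hB g hg).1 e, (hHB k hk).1 h0, add_zero]
      · have h0 : g.2 + k.2 = 0 := h0
        have := key g hg (-k) (H.neg_mem hk) (by simpa using eq_neg_of_add_eq_zero_left h0)
        rw [this.1, neg_eq_zero.1 this.2, add_zero])
    rw [eq_bot_iff]
    intro z hz
    have hzG : z ∈ G := hle (le_sup_right (a := G) hz)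
    exact (key z hzG z hz rfl).1
  have oYB : Orth (LinearMap.ker (a + b + d)) (LinearMap.range b) := by
    refine oYA.glue oYA (a ∘ₗ q) ?_ ?_
    · rintro _ ⟨x, rfl⟩ h0
      have h0 : a (q (b x)) = 0 := h0
      rw [← Apq x, h0, map_zero]
      exact Submodule.zero_mem _
    · intro v _
      exact ⟨q v, rfl⟩
  have oYBD : Orth (LinearMap.ker (a + b + d)) (LinearMap.range (b + d)) := by
    refine oYD.glue oYB b ?_ (fun v _ => ⟨v, rfl⟩)
    rintro _ ⟨x, rfl⟩ h0
    simp only [LinearMap.add_apply, map_add, Abb, Abd, add_zero] at h0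
    exact ⟨x, by simp [h0]⟩
  have oYX : Orth (LinearMap.ker (a + b + d)) (LinearMap.range (a + b + d)) := by
    refine oYA.glue oYBD (b + d) ?_ (fun v _ => ⟨v, rfl⟩)
    rintro _ ⟨x, rfl⟩ h0
    simp only [LinearMap.add_apply, map_add, Abb, Abd, Aba, Ada, Adb, Add', add_zero,
      zero_add] at h0
    exact ⟨x, by simp [add_assoc, h0]⟩
  refine ⟨a, b, d, p, q, r, s, haa, hbb, LinearMap.ext Add', hab, hba, LinearMap.ext Aad,
    LinearMap.ext Ada, LinearMap.ext Abd, LinearMap.ext Adb, hqp, hpq, ?_, ?_, oYX⟩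
  · ext x
    simp only [Module.End.mul_apply]
    obtain ⟨z, hz, h⟩ := d1 x
    have h : z.1 = d x := h
    rw [← h, hr z hz, (hG z hz).1.2.2, hs z hz, h, Add']
  · intro H hH hC
    refine hsf H (fun z hz => ?_) hC
    have h1 := kere _ (hH z hz).1
    have h2 := kere _ (hH z hz).2
    exact ⟨⟨h1.1, h1.2.1⟩, h2.1, h2.2.1⟩

end

section
variable {R : Type u} [Ring R] {M : Type v} {E : Type w} [AddCommGroup M] [Module R M]
  [AddCommGroup E] [Module R E]

def Pres (i : M →ₗ[R] E) (h : E →ₗ[R] E) : Prop := ∀ m, h (i m) ∈ LinearMap.range i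

theorem Pres.mul {i : M →ₗ[R] E} {h k : E →ₗ[R] E} (hh : Pres i h) (hk : Pres i k) :
    Pres i (h * k) := by
  intro m
  obtain ⟨m', hm⟩ := hk m
  rw [Module.End.mul_apply, ← hm]
  exact hh m'

theorem Pres.add {i : M →ₗ[R] E} {h k : E →ₗ[R] E} (hh : Pres i h) (hk : Pres i k) :
    Pres i (h + k) := fun m => Submodule.add_mem _ (hh m) (hk m)

theorem pres_sq {i : M →ₗ[R] E} (hinv : HullAutInv i) {n : E →ₗ[R] E} (hn : n * n = 0) :
    Pres i n := by
  have hn' : ∀ x, n (n x) = 0 := fun x => LinearMap.congr_fun hn x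
  let g : E ≃ₗ[R] E := LinearEquiv.ofLinearMap (LinearMap.id + n) (LinearMap.id - n)
    (by ext x; simp [hn']) (by ext x; simp [hn'])
  intro m
  have h1 : g (i m) = i m + n (i m) := rfl
  have h2 := Submodule.sub_mem _ (hinv g m) (LinearMap.mem_range_self i m)
  rw [h1] at h2
  simpa using h2

theorem rel_inj (i : M →ₗ[R] E) (hi : Function.Injective i) (hE : Module.Injective R E)
    (u v : E →ₗ[R] E) (hu : u * u = u) (hv : v * v = v)
    (huv : ∀ h : E →ₗ[R] E, Pres i (u * h * v)) :
    RelInjective R ↥((LinearMap.range u).comap i) ↥((LinearMap.range v).comap i) := by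
  intro A f
  obtain ⟨h, hh⟩ := ext_map hE (i ∘ₗ ((LinearMap.range v).comap i).subtype ∘ₗ A.subtype)
    (i ∘ₗ ((LinearMap.range u).comap i).subtype ∘ₗ f) (by
      intro t ht
      have h1 : i t.1.1 = 0 := ht
      have h2 : t.1.1 = 0 := hi (by rw [h1, map_zero])
      exact Subtype.ext (Subtype.ext h2))
  let eqv := LinearEquiv.ofInjective i hi
  have heq : ∀ y, i (eqv.symm y) = y.1 := fun y => by
    have := eqv.apply_symm_apply y
    exact congrArg Subtype.val this
  let g0 : M →ₗ[R] M := eqv.symm.toLinearMap ∘ₗ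
    LinearMap.codRestrict (LinearMap.range i) ((u * h * v) ∘ₗ i) (huv h)
  have hg0 : ∀ m, i (g0 m) = u (h (v (i m))) := fun m => heq _
  refine ⟨LinearMap.codRestrict _ (g0 ∘ₗ ((LinearMap.range v).comap i).subtype) ?_, ?_⟩
  · intro m
    exact ⟨_, (hg0 m.1).symm⟩
  · intro t
    apply Subtype.ext
    apply hi
    have h1 : v (i t.1.1) = i t.1.1 := by
      obtain ⟨x, hx⟩ := t.1.2
      have hx : v x = i t.1.1 := hx
      rw [← hx]; exact LinearMap.congr_fun hv x
    have h2 : h (i t.1.1) = i (f t).1 := hh t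
    have h3 : u (i (f t).1) = i (f t).1 := by
      obtain ⟨x, hx⟩ := (f t).2
      have hx : u x = i (f t).1 := hx
      rw [← hx]; exact LinearMap.congr_fun hu x
    refine (hg0 t.1.1).trans ?_
    rw [h1, h2, h3]

end

end AutInvProof

open AutInvProof
/-- every automorphism-invariant module decomposes as `M = X ⊕ Y` with `X`
quasi-injective, `Y` square-free, `X` and `Y` orthogonal and relatively injective. -/
theorem autInvariant_decomposition {R : Type u} [Ring R]
    {M : Type v} {E : Type w} [AddCommGroup M] [Module R M] [AddCommGroup E] [Module R E]
    (i : M →ₗ[R] E) (hhull : IsInjectiveHull i) (hinv : HullAutInv i) :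
    ∃ X Y : Submodule R M, IsCompl X Y ∧ QuasiInjective R ↥X ∧ SquareFreeMod R ↥Y ∧
      OrthogonalMod R ↥X ↥Y ∧ RelInjective R ↥X ↥Y ∧ RelInjective R ↥Y ↥X := by
  have hE := hhull.injE
  have hi := hhull.inj
  obtain ⟨a, b, d, p, q, r, s, haa, hbb, hdd, hab, hba, had, hda, hbd, hdb, hqp, hpq, hsr,
    hsf, hor⟩ := split2 (R := R) hE
  -- off-diagonal maps preserve `M`
  have off : ∀ (x y : E →ₗ[R] E), y * x = 0 → ∀ h, Pres i (x * h * y) := by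
    intro x y hyx h
    apply pres_sq hinv
    calc x * h * y * (x * h * y) = x * h * (y * x) * h * y := by noncomm_ring
      _ = 0 := by rw [hyx]; simp
  have pA : ∀ h, Pres i (a * h * a) := by
    intro h
    have : a * h * a = (a * q * b) * (b * (p * a * h) * a) := by
      calc a * h * a = a * (a * h * a) := by rw [← mul_assoc, ← mul_assoc, haa]
        _ = a * (q * b * p * a * h * a) := by rw [hqp]
        _ = a * (q * (b * b) * p * a * h * a) := by rw [hbb]
        _ = _ := by simp only [mul_assoc]
    rw [this]
    exact (off _ _ hba q).mul (off _ _ hab _)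
  have pB : ∀ h, Pres i (b * h * b) := by
    intro h
    have : b * h * b = (b * p * a) * (a * (q * b * h) * b) := by
      calc b * h * b = b * (b * h * b) := by rw [← mul_assoc, ← mul_assoc, hbb]
        _ = b * (p * a * q * b * h * b) := by rw [hpq]
        _ = b * (p * (a * a) * q * b * h * b) := by rw [haa]
        _ = _ := by simp only [mul_assoc]
    rw [this]
    exact (off _ _ hab p).mul (off _ _ hba _)
  have pD : ∀ h, Pres i (d * h * d) := by
    intro h
    have : d * h * d = (d * s * a) * (a * (r * d * h) * d) := by
      calc d * h * d = d * s * a * r * d * h * d := by rw [hsr]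
        _ = d * s * (a * a) * r * d * h * d := by rw [haa]
        _ = _ := by simp only [mul_assoc]
    rw [this]
    exact (off _ _ had s).mul (off _ _ hda _)
  set e : E →ₗ[R] E := a + b + d with he
  have pX : ∀ h, Pres i (e * h * e) := by
    intro h
    have : e * h * e = a * h * a + a * h * b + a * h * d + b * h * a + b * h * b + b * h * d
        + d * h * a + d * h * b + d * h * d := by
      rw [he]; noncomm_ring
    rw [this]
    exact ((((((((pA h).add (off _ _ hba h)).add (off _ _ hda h)).add (off _ _ hab h)).add
      (pB h)).add (off _ _ hdb h)).add (off _ _ had h)).add (off _ _ hbd h)).add (pD h)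
  have hee : e * e = e := by
    rw [he]
    simp only [mul_add, add_mul, haa, hbb, hdd, hab, hba, had, hda, hbd, hdb, add_zero, zero_add]
  have hEe : ∀ x, e (e x) = e x := fun x => LinearMap.congr_fun hee x
  have pe : Pres i e := by
    have := pX 1
    rwa [mul_one, hee] at this
  let y : E →ₗ[R] E := 1 - e
  have hy : ∀ x, y x = x - e x := fun x => rfl
  have hey : e * y = 0 := by simp [y, mul_sub, hee]
  have hye : y * e = 0 := by simp [y, sub_mul, hee]
  have hyy : y * y = y := by
    change (1 - e) * y = y
    rw [sub_mul, hey, one_mul, sub_zero]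
  have rng : ∀ x, x ∈ LinearMap.range y → e x = 0 := by
    rintro _ ⟨x, rfl⟩
    exact LinearMap.congr_fun hey x
  have rngX : ∀ x, x ∈ LinearMap.range e → e x = x := by
    rintro _ ⟨x, rfl⟩
    exact hEe x
  refine ⟨(LinearMap.range e).comap i, (LinearMap.range y).comap i, ?_,
    rel_inj i hi hE e e hee hee pX, ?_, ?_, rel_inj i hi hE e y hee hyy (off _ _ hye),
    rel_inj i hi hE y e hyy hee (off _ _ hey)⟩
  · constructor
    · rw [Submodule.disjoint_def]
      intro m h1 h2
      apply hi
      rw [map_zero, ← rngX _ h1]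
      exact rng _ h2
    · rw [codisjoint_iff, eq_top_iff]
      intro m _
      obtain ⟨m', hm'⟩ := pe m
      refine Submodule.mem_sup.2 ⟨m', ⟨i m, hm'.symm⟩, m - m', ⟨i m, ?_⟩, by abel⟩
      rw [map_sub, hm', hy]
  · rintro A B hAB ⟨φ⟩
    let Y := (LinearMap.range y).comap i
    have := hsf (LinearMap.range (LinearMap.prod (i ∘ₗ Y.subtype ∘ₗ A.subtype)
      (i ∘ₗ Y.subtype ∘ₗ B.subtype ∘ₗ φ.toLinearMap))) (by
      rintro _ ⟨t, rfl⟩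
      exact ⟨rng _ t.1.2, rng _ (φ t).1.2⟩) (by
      rintro _ ⟨t, rfl⟩ _ ⟨t', rfl⟩ h0
      have h0 : i t.1.1 = i (φ t').1.1 := h0
      have h1 : t.1 = (φ t').1 := Subtype.ext (hi h0)
      have h2 : t.1 ∈ A ⊓ B := ⟨t.2, h1 ▸ (φ t').2⟩
      rw [hAB] at h2
      have h3 : t.1 = 0 := by simpa using h2
      have h4 : t = 0 := Subtype.ext h3
      have h5 : φ t' = 0 := Subtype.ext (h1.symm.trans h3)
      have h6 : t' = 0 := by simpa using h5
      rw [h4, h6]; simp)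
    rw [LinearMap.range_eq_bot] at this
    rw [eq_bot_iff]
    intro t ht
    have h1 : i t.1 = 0 := congrArg Prod.fst (LinearMap.congr_fun this ⟨t, ht⟩)
    have h2 : t.1 = 0 := hi (by rw [h1, map_zero])
    have h3 : t = 0 := Subtype.ext h2
    simp [h3]
  · rintro A B ⟨φ⟩
    let Y := (LinearMap.range y).comap i
    let X := (LinearMap.range e).comap i
    have := hor (LinearMap.range (LinearMap.prod
      (i ∘ₗ Y.subtype ∘ₗ B.subtype ∘ₗ φ.toLinearMap) (i ∘ₗ X.subtype ∘ₗ A.subtype))) (by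
      rintro _ ⟨t, rfl⟩
      exact ⟨rng _ (φ t).1.2, t.1.2⟩) (by
      rintro _ ⟨t, rfl⟩
      refine ⟨fun h0 => ?_, fun h0 => ?_⟩
      · have h0 : i (φ t).1.1 = 0 := h0
        have h1 : (φ t).1.1 = 0 := hi (by rw [h0, map_zero])
        have h2 : φ t = 0 := Subtype.ext (Subtype.ext h1)
        have h3 : t = 0 := by simpa using h2
        rw [h3, map_zero]
      · have h0 : i t.1.1 = 0 := h0
        have h1 : t.1.1 = 0 := hi (by rw [h0, map_zero])
        have h2 : t = 0 := Subtype.ext (Subtype.ext h1)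
        rw [h2, map_zero])
    rw [LinearMap.range_eq_bot] at this
    rw [eq_bot_iff]
    intro t ht
    have h1 : i t.1 = 0 := congrArg Prod.snd (LinearMap.congr_fun this ⟨t, ht⟩)
    have h2 : t.1 = 0 := hi (by rw [h1, map_zero])
    have h3 : t = 0 := Subtype.ext h2
    simp [h3]
end

section
/- A prime right nonsingular ring R such that R_R is automorphism-invariant is right self-injective. -/
universe u v w

namespace AutInvProof

/-- A submodule disjoint from `A` is contained in one maximal with this property. -/
lemma exists_max_disjoint {A : Type u} [Ring A] {M : Type v} [AddCommGroup M] [Module A M]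
    (N B : Submodule A M) (h : Disjoint N B) :
    ∃ C : Submodule A M, B ≤ C ∧ Disjoint N C ∧ ∀ D, C ≤ D → Disjoint N D → D ≤ C := by
  obtain ⟨C, hBC, hC⟩ := zorn_le_nonempty₀ {C : Submodule A M | Disjoint N C} (by
    intro c hc hch y hy
    refine ⟨sSup c, ?_, fun z hz => le_sSup hz⟩
    have := hch.directedOn.disjoint_sSup_right (a := N)
    exact this.2 (fun b hb => hc hb)) B h
  exact ⟨C, hBC, hC.1, fun D hD hND => hC.2 hND hD⟩

lemma essential_sup {A : Type u} [Ring A] {M : Type v} [AddCommGroup M] [Module A M]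
    (N C : Submodule A M) (h : Disjoint N C) (hm : ∀ D, C ≤ D → Disjoint N D → D ≤ C) :
    EssentialSub (N ⊔ C) := by
  intro K hK
  have h1 : Disjoint (N ⊔ C) K := (disjoint_iff.2 hK).symm
  have h2 := hm (C ⊔ K) le_sup_left (h.disjoint_sup_right_of_disjoint_sup_left h1)
  have h3 : K ≤ N ⊔ C := (le_sup_right.trans h2).trans le_sup_right
  exact disjoint_self.1 (h1.mono_left h3)

lemma coprod_injective {A : Type u} [Ring A] {M : Type v} [AddCommGroup M] [Module A M]
    (N C : Submodule A M) (h : Disjoint N C) :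
    Function.Injective (N.subtype.coprod C.subtype) := by
  rw [← LinearMap.ker_eq_bot, LinearMap.ker_eq_bot']
  rintro ⟨x, y⟩ hxy
  simp only [LinearMap.coprod_apply, Submodule.subtype_apply] at hxy
  have hx : (x : M) = 0 := by
    refine Submodule.disjoint_def.1 h _ x.2 ?_
    rw [eq_neg_of_add_eq_zero_left hxy]
    exact C.neg_mem y.2
  have hy : (y : M) = 0 := by simpa [hx] using hxy
  ext <;> simp [hx, hy]

lemma exists_injectiveHull (A : Type u) [Ring A] (M : Type u) [AddCommGroup M] [Module A M] :
    ∃ (E : Type u) (_ : AddCommGroup E) (_ : Module A E) (i : M →ₗ[A] E), IsInjectiveHull i := by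
  obtain ⟨P⟩ := CategoryTheory.EnoughInjectives.presentation (ModuleCat.of A M)
  have hJ : Module.Injective A P.J := (Module.injective_iff_injective_object A P.J).2 P.injective
  let f : M →ₗ[A] P.J := P.f.hom
  have hf : Function.Injective f := (ModuleCat.mono_iff_injective P.f).1 P.mono
  obtain ⟨K, -, hK, hKm⟩ := exists_max_disjoint (LinearMap.range f) ⊥ disjoint_bot_right
  obtain ⟨E, hE, hKE, hEm⟩ := exists_max_disjoint K (LinearMap.range f) hK.symm
  obtain ⟨π, hπ⟩ := hJ.out _ (coprod_injective E K hKE.symm)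
    (E.subtype.comp (LinearMap.fst A E K))
  have hπE : ∀ e ∈ E, π e = e := fun e he => by simpa using hπ (⟨e, he⟩, 0)
  have hπK : ∀ k ∈ K, π k = 0 := fun k hk => by simpa using hπ (0, ⟨k, hk⟩)
  have hcomap : K.comap π ≤ K := by
    apply hKm
    · intro k hk
      simp [hπK k hk]
    · rw [Submodule.disjoint_def]
      intro x hx hx'
      have hxE := hE hx
      rw [Submodule.mem_comap, hπE x hxE] at hx'
      exact Submodule.disjoint_def.1 hKE x hx' hxE
  have hrange : LinearMap.range π ≤ E := by
    apply hEm
    · intro e he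
      exact ⟨e, hπE e he⟩
    · rw [Submodule.disjoint_def]
      rintro x hx ⟨j, rfl⟩
      exact hπK j (hcomap hx)
  let ρ : P.J →ₗ[A] E := π.codRestrict E (fun x => hrange ⟨x, rfl⟩)
  let i : M →ₗ[A] E := f.codRestrict E (fun x => hE ⟨x, rfl⟩)
  refine ⟨E, inferInstance, inferInstance, i, ⟨?_, ⟨?_⟩, ?_⟩⟩
  · intro x y hxy
    exact hf (congrArg Subtype.val hxy)
  · intro X Y _ _ _ _ g hg h
    obtain ⟨h', hh'⟩ := hJ.out g hg (E.subtype.comp h)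
    refine ⟨ρ.comp h', fun x => ?_⟩
    apply Subtype.ext
    change π (h' (g x)) = h x
    rw [hh']
    exact hπE _ (h x).2
  · intro X hX
    have hXK : X.map E.subtype ≤ E := Submodule.map_subtype_le E X
    have h1 : Disjoint (LinearMap.range f) (X.map E.subtype) := by
      rw [Submodule.disjoint_def]
      rintro _ ⟨m, rfl⟩ ⟨x, hx, hxm⟩
      have : x ∈ X ⊓ LinearMap.range i := ⟨hx, m, Subtype.ext hxm.symm⟩
      rw [hX, Submodule.mem_bot] at this
      rw [← hxm, this]; simp
    have h2 : Disjoint (LinearMap.range f) (X.map E.subtype ⊔ K) := by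
      apply h1.disjoint_sup_right_of_disjoint_sup_left
      exact hKE.symm.mono_left (sup_le hE hXK)
    have h3 := (le_sup_left).trans (hKm _ le_sup_right h2)
    have h4 : X.map E.subtype = ⊥ := disjoint_self.1 (hKE.mono h3 hXK)
    exact Submodule.map_injective_of_injective E.injective_subtype (h4.trans (Submodule.map_bot _).symm)

lemma essential_comap {A : Type u} [Ring A] {L : Type v} {M : Type w} [AddCommGroup M] [Module A M]
    [AddCommGroup L] [Module A L] (f : L →ₗ[A] M) (N : Submodule A M) (hN : EssentialSub N) :
    EssentialSub (N.comap f) := by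
  intro K hK
  have h1 : K.map f = ⊥ := by
    apply hN
    rw [← disjoint_iff, Submodule.disjoint_def]
    rintro _ ⟨k, hk, rfl⟩ hkN
    have : k ∈ K ⊓ N.comap f := ⟨hk, hkN⟩
    rw [hK, Submodule.mem_bot] at this
    simp [this]
  rw [← hK, eq_comm, inf_eq_left]
  intro k hk
  have : f k ∈ K.map f := ⟨k, hk, rfl⟩
  rw [h1, Submodule.mem_bot] at this
  simp [this]

lemma essential_mono {A : Type u} [Ring A] {M : Type w} [AddCommGroup M] [Module A M]
    {N N' : Submodule A M} (h : N ≤ N') (hN : EssentialSub N) : EssentialSub N' := fun K hK =>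
  hN K (le_bot_iff.1 (hK ▸ inf_le_inf_left K h))

lemma nonsingular_hull {A : Type u} [Ring A] {M : Type v} {E : Type w} [AddCommGroup M] [Module A M]
    [AddCommGroup E] [Module A E] (i : M →ₗ[A] E) (hi : Function.Injective i)
    (hess : EssentialSub (LinearMap.range i)) (hM : NonsingularMod A M) : NonsingularMod A E := by
  intro y hy
  by_contra hy0
  have h1 : Submodule.span A {y} ⊓ LinearMap.range i ≠ ⊥ := by
    intro h
    exact hy0 (by simpa using hess _ h)
  obtain ⟨z, ⟨hz1, m, hm⟩, hz0⟩ := Submodule.exists_mem_ne_zero_of_ne_bot h1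
  obtain ⟨r, rfl⟩ := Submodule.mem_span_singleton.1 hz1
  apply hz0
  rw [← hm]
  have : m = 0 := by
    apply hM
    refine essential_mono ?_ (essential_comap (LinearMap.toSpanSingleton A A r) _ hy)
    intro t ht
    simp only [Submodule.mem_comap, LinearMap.mem_ker, LinearMap.toSpanSingleton_apply,
      smul_eq_mul] at ht ⊢
    apply hi
    rw [map_smul, hm, smul_smul, ht, map_zero]
  simp [this]

lemma eq_zero_of_essential {A : Type u} [Ring A] {E : Type w}
    [AddCommGroup E] [Module A E] (hE : NonsingularMod A E) (s : E →ₗ[A] E) (N : Submodule A E)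
    (hN : EssentialSub N) (h : ∀ x ∈ N, s x = 0) : s = 0 := by
  ext x
  apply hE
  refine essential_mono ?_ (essential_comap (LinearMap.toSpanSingleton A E x) N hN)
  intro t ht
  simp only [Submodule.mem_comap, LinearMap.mem_ker, LinearMap.toSpanSingleton_apply] at ht ⊢
  rw [← map_smul, h _ ht]

lemma sq_zero_mem {S : Type*} [Ring S] (T : Subring S) (hT : ∀ u : Sˣ, (u : S) ∈ T) (x : S)
    (hx : x * x = 0) : x ∈ T := by
  have h := hT ⟨1 + x, 1 - x, by simp [mul_sub, add_mul, hx], by simp [mul_add, sub_mul, hx]⟩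
  simpa using T.sub_mem h T.one_mem

lemma corner_mem {S : Type*} [Ring S] (T : Subring S) (hT : ∀ u : Sˣ, (u : S) ∈ T) (p c e : S)
    (h1 : e * c = p) (h2 : c * p = c) (h3 : p * c = 0) (h4 : e * p = 0)
    (s : S) : p * s ∈ T := by
  have hpp : p * p = p := by
    nth_rw 1 [← h1]
    rw [mul_assoc, h2, h1]
  have h5 : p * s * (1 - p) ∈ T := by
    apply sq_zero_mem T hT
    have : (1 - p) * p = 0 := by rw [sub_mul, hpp]; simp
    calc p * s * (1 - p) * (p * s * (1 - p)) = p * s * ((1 - p) * p) * s * (1 - p) := by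
          simp only [mul_assoc]
      _ = 0 := by rw [this]; simp
  have h6 : p * s * e ∈ T := by
    apply sq_zero_mem T hT
    calc p * s * e * (p * s * e) = p * s * (e * p) * s * e := by simp only [mul_assoc]
      _ = 0 := by rw [h4]; simp
  have h7 : c ∈ T := by
    apply sq_zero_mem T hT
    calc c * c = c * (p * c) := by rw [← mul_assoc, h2]
      _ = 0 := by rw [h3]; simp
  have h8 : p * s = p * s * (1 - p) + p * s * e * c := by
    rw [mul_assoc _ e c, h1, mul_sub, mul_one]; simp
  rw [h8]
  exact T.add_mem h5 (T.mul_mem h6 h7)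

lemma ring_part {S : Type*} [Ring S] (T : Subring S) (hT : ∀ u : Sˣ, (u : S) ∈ T) (a b d : S)
    (haa : a * a = 0) (hbb : b * b = 0) (haba : a * b * a = a) (hbab : b * a * b = b)
    (hd : d = 1 - b * a - a * b)
    (hprime : ∀ s t : S, (∀ u, s * u * t = 0) → s = 0 ∨ t = 0)
    (hM : ∀ w, d * w = w → w * d = w → w * w = 0 → w = 0)
    (hI : ∀ h, h * d = h → (∀ y, d * y = y → h * y = 0 → y = 0) → ∃ b', b' * h = d) :
    ∀ s, s ∈ T := by
  have hda : d * a = 0 := by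
    rw [hd, sub_mul, sub_mul, haba, mul_assoc, haa]; simp
  have hdb : d * b = 0 := by
    rw [hd, sub_mul, sub_mul, hbab, mul_assoc, hbb]; simp
  have hbd : b * d = 0 := by
    rw [hd, mul_sub, mul_sub, ← mul_assoc, ← mul_assoc, hbab, hbb]; simp
  have had : a * d = 0 := by
    rw [hd, mul_sub, mul_sub, ← mul_assoc, ← mul_assoc, haba, haa]; simp
  have hdd : d * d = d := by
    nth_rw 2 [hd]
    rw [mul_sub, mul_sub, ← mul_assoc, ← mul_assoc, hda, hdb]; simp
  have hdom : ∀ x y, x * d = x → d * y = y → x * y = 0 → x = 0 ∨ y = 0 := by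
    intro x y hx hy hxy
    refine (hprime y x fun u => ?_).symm
    apply hM
    · rw [← mul_assoc, ← mul_assoc, hy]
    · rw [mul_assoc, hx]
    · calc y * u * x * (y * u * x) = y * u * (x * y) * u * x := by simp only [mul_assoc]
        _ = 0 := by rw [hxy]; simp
  have hinv : ∀ h, h ≠ 0 → h * d = h → ∃ b', b' * h = d := fun h h0 hh =>
    hI h hh fun y hy hhy => (hdom h y hh hy hhy).resolve_left h0
  by_cases ha : a = 0
  · have hd1 : d = 1 := by simp [hd, ha]
    subst hd1
    intro s
    by_cases hs : s = 0
    · rw [hs]; exact T.zero_mem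
    obtain ⟨c, hc⟩ := hinv s hs (by simp)
    have : (1 - s * c) = 0 := by
      refine (hdom (1 - s * c) s (by simp) (by simp) ?_).resolve_right hs
      rw [sub_mul, mul_assoc, hc]; simp
    exact hT ⟨s, c, (sub_eq_zero.1 this).symm, hc⟩
  have hp : ∀ s, b * a * s ∈ T := corner_mem T hT (b * a) a b rfl (by rw [← mul_assoc, haba])
    (by rw [mul_assoc, haa, mul_zero]) (by rw [← mul_assoc, hbb, zero_mul])
  have hq : ∀ s, a * b * s ∈ T := corner_mem T hT (a * b) b a rfl (by rw [← mul_assoc, hbab])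
    (by rw [mul_assoc, hbb, mul_zero]) (by rw [← mul_assoc, haa, zero_mul])
  have hds : ∀ s, d * s ∈ T := by
    intro s
    by_cases hd0 : d = 0
    · rw [hd0, zero_mul]; exact T.zero_mem
    obtain ⟨u, hu⟩ : ∃ u, a * u * d ≠ 0 := by
      by_contra! hcon
      exact (hprime a d hcon).elim ha hd0
    obtain ⟨c, hc⟩ := hinv _ hu (by rw [mul_assoc, hdd])
    have hdh : d * (a * u * d) = 0 := by rw [← mul_assoc, ← mul_assoc, hda]; simp
    refine corner_mem T hT d (a * u * d) (d * c * (1 - d)) ?_ (by rw [mul_assoc, hdd]) hdh ?_ s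
    · rw [mul_assoc, sub_mul, hdh, one_mul, sub_zero, mul_assoc, hc, hdd]
    · rw [mul_assoc, sub_mul, hdd]; simp
  intro s
  have : s = b * a * s + a * b * s + d * s := by rw [hd]; noncomm_ring
  rw [this]
  exact T.add_mem (T.add_mem (hp s) (hq s)) (hds s)

lemma prime_elem {R : Type u} [Ring R]
    (hprime : ∀ I J : TwoSidedIdeal R, (∀ x ∈ I, ∀ y ∈ J, x * y = 0) → I = ⊥ ∨ J = ⊥)
    (x y : R) (h : ∀ c, x * c * y = 0) : x = 0 ∨ y = 0 := by
  let I : TwoSidedIdeal R := TwoSidedIdeal.mk' {z | ∀ c, z * c * y = 0} (by simp)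
    (fun {p q} hp hq c => by simp [add_mul, hp c, hq c]) (fun {p} hp c => by simp [hp c])
    (fun {p q} hq c => by rw [mul_assoc p, mul_assoc p, hq c, mul_zero])
    (fun {p q} hp c => by rw [mul_assoc p, hp])
  have hI : ∀ z, z ∈ I ↔ ∀ c, z * c * y = 0 := fun z => TwoSidedIdeal.mem_mk' _ _ _ _ _ _ z
  let J : TwoSidedIdeal R := TwoSidedIdeal.mk' {z | ∀ t ∈ I, t * z = 0} (by simp)
    (fun {p q} hp hq c hc => by simp [mul_add, hp c hc, hq c hc])
    (fun {p} hp c hc => by simp [hp c hc])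
    (fun {p q} hq c hc => by rw [← mul_assoc]; exact hq _ (I.mul_mem_right _ _ hc))
    (fun {p q} hp c hc => by rw [← mul_assoc, hp c hc, zero_mul])
  have hJ : ∀ z, z ∈ J ↔ ∀ t ∈ I, t * z = 0 := fun z => TwoSidedIdeal.mem_mk' _ _ _ _ _ _ z
  have hx : x ∈ I := (hI x).2 h
  have hy : y ∈ J := (hJ y).2 fun t ht => by simpa using (hI t).1 ht 1
  rcases hprime I J (fun s hs t ht => (hJ t).1 ht s hs) with h | h
  · left; rwa [h, TwoSidedIdeal.mem_bot] at hx
  · right; rwa [h, TwoSidedIdeal.mem_bot] at hy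

/-- A maximal partial isomorphism between disjoint submodules of a nonsingular injective module. -/
lemma module_part {A : Type u} [Ring A] {E : Type v} [AddCommGroup E] [Module A E]
    (hinj : Module.Injective A E) (hE : NonsingularMod A E) :
    ∃ a b d : Module.End A E, a * a = 0 ∧ b * b = 0 ∧ a * b * a = a ∧ b * a * b = b ∧
      d = 1 - b * a - a * b ∧ (∀ w, d * w = w → w * d = w → w * w = 0 → w = 0) := by
  obtain ⟨f, -, hf⟩ := zorn_le_nonempty₀
    {f : E →ₗ.[A] E | ∀ x : f.domain, f x ∈ f.domain → (x : E) = 0} (by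
      intro c hc hch y hy
      refine ⟨LinearPMap.sSup c hch.directedOn, ?_, fun z hz => LinearPMap.le_sSup _ hz⟩
      rintro ⟨x, hx⟩ hx'
      obtain ⟨g, hg, hxg⟩ := (LinearPMap.mem_domain_sSup_iff ⟨y, hy⟩ hch.directedOn).1 hx
      obtain ⟨k, hk, hxk⟩ := (LinearPMap.mem_domain_sSup_iff ⟨y, hy⟩ hch.directedOn).1 hx'
      obtain ⟨l, hl, hgl, hkl⟩ := hch.directedOn g hg k hk
      have h1 := LinearPMap.sSup_apply hch.directedOn hl ⟨x, hgl.1 hxg⟩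
      refine hc hl ⟨x, hgl.1 hxg⟩ ?_
      rw [← h1]
      exact hkl.1 hxk) ⊥ (by
      rintro ⟨x, hx⟩ -
      exact hx)
  have hfZ : ∀ x : f.domain, f x ∈ f.domain → (x : E) = 0 := hf.1
  let j : f.domain × f.domain →ₗ[A] E := f.domain.subtype.coprod f.toFun
  have hj : ∀ x y, j (x, y) = x + f y := fun x y => rfl
  have hjinj : ∀ x y, j (x, y) = 0 → x = 0 ∧ y = 0 := by
    intro x y hxy
    rw [hj] at hxy
    have hy : y = 0 := by
      apply Subtype.ext
      apply hfZ
      rw [eq_neg_of_add_eq_zero_right hxy]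
      exact f.domain.neg_mem x.2
    subst hy
    exact ⟨Subtype.ext (by simpa using hxy), rfl⟩
  obtain ⟨C, -, hC, hCm⟩ := exists_max_disjoint (LinearMap.range j) ⊥ disjoint_bot_right
  have hess := essential_sup _ _ hC hCm
  let J : (f.domain × f.domain) × C →ₗ[A] E := j.coprod C.subtype
  have hJ : Function.Injective J := by
    rw [← LinearMap.ker_eq_bot, LinearMap.ker_eq_bot']
    rintro ⟨⟨x, y⟩, c⟩ h
    have h' : j (x, y) + c = 0 := h
    have hj0 : j (x, y) = 0 := by
      refine Submodule.disjoint_def.1 hC _ ⟨_, rfl⟩ ?_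
      rw [eq_neg_of_add_eq_zero_left h']
      exact C.neg_mem c.2
    obtain ⟨rfl, rfl⟩ := hjinj x y hj0
    have hc : c = 0 := Subtype.ext (by simpa [hj0] using h')
    rw [hc]; rfl
  obtain ⟨a, ha⟩ := hinj.out J hJ
    (f.toFun.comp ((LinearMap.fst A _ _).comp (LinearMap.fst A _ _)))
  obtain ⟨b, hb⟩ := hinj.out J hJ
    (f.domain.subtype.comp ((LinearMap.snd A _ _).comp (LinearMap.fst A _ _)))
  have hJ' : ∀ x y c, J ((x, y), c) = x + f y + c := fun x y c => rfl
  have ha' : ∀ (x y : f.domain) (c : C), a (x + f y + c) = f x := fun x y c => ha ((x, y), c)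
  have hb' : ∀ (x y : f.domain) (c : C), b (x + f y + c) = y := fun x y c => hb ((x, y), c)
  have ha1 : ∀ x : f.domain, a x = f x := fun x => by simpa using ha' x 0 0
  have ha2 : ∀ x : f.domain, a (f x) = 0 := fun x => by simpa using ha' 0 x 0
  have ha3 : ∀ x : C, a x = 0 := fun x => by simpa using ha' 0 0 x
  have hb1 : ∀ x : f.domain, b x = 0 := fun x => by simpa using hb' x 0 0
  have hb2 : ∀ x : f.domain, b (f x) = x := fun x => by simpa using hb' 0 x 0
  have hb3 : ∀ x : C, b x = 0 := fun x => by simpa using hb' 0 0 x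
  clear ha hb ha' hb'
  have hext : ∀ s : Module.End A E, (∀ x : f.domain, s x = 0) → (∀ x : f.domain, s (f x) = 0) →
      (∀ x : C, s x = 0) → s = 0 := by
    intro s h1 h2 h3
    refine eq_zero_of_essential hE s _ hess ?_
    intro z hz
    obtain ⟨_, ⟨⟨x, y⟩, rfl⟩, c, hc, rfl⟩ := Submodule.mem_sup.1 hz
    rw [hj, map_add, map_add, h1, h2, h3 ⟨c, hc⟩]; simp
  have haa : a * a = 0 := by
    apply hext <;> intro x <;> simp [ha1, ha2, ha3]
  have hbb : b * b = 0 := by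
    apply hext <;> intro x <;> simp [hb1, hb2, hb3]
  have haba : a * b * a = a := by
    rw [← sub_eq_zero]
    apply hext <;> intro x <;> simp [hb1, hb2, hb3, ha1, ha2, ha3]
  have hbab : b * a * b = b := by
    rw [← sub_eq_zero]
    apply hext <;> intro x <;> simp [hb1, hb2, hb3, ha1, ha2, ha3]
  refine ⟨a, b, _, haa, hbb, haba, hbab, rfl, ?_⟩
  generalize hd : 1 - b * a - a * b = d
  have hd1 : ∀ x ∈ f.domain, d x = 0 := by
    intro x hx
    have h1 := ha1 ⟨x, hx⟩
    have h2 := hb1 ⟨x, hx⟩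
    have h3 := hb2 ⟨x, hx⟩
    simp only at h1 h2 h3
    simp [← hd, h1, h2, h3]
  have hd2 : ∀ x : f.domain, d (f x) = 0 := by
    intro x
    simp [← hd, ha1, ha2, hb2]
  have hdd : ∀ x, d (d x) = d x := by
    have : d * d - d = 0 := by
      apply hext
      · intro x; simp [hd1]
      · intro x; simp [hd2]
      · intro x
        have : d x = x := by simp [← hd, ha3, hb3]
        simp [this]
    intro x
    exact LinearMap.congr_fun (sub_eq_zero.1 this) x
  intro w hdw hwd hww
  have hdw' : ∀ x, d (w x) = w x := fun x => LinearMap.congr_fun hdw x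
  have hwd' : ∀ x, w (d x) = w x := fun x => LinearMap.congr_fun hwd x
  have hww' : ∀ x, w (w x) = 0 := fun x => LinearMap.congr_fun hww x
  refine eq_zero_of_essential hE w (LinearMap.ker w) ?_ (fun x hx => hx)
  intro K hK
  have hK' : ∀ k ∈ K, w k = 0 → k = 0 := by
    intro k hk hk'
    have : k ∈ K ⊓ LinearMap.ker w := ⟨hk, hk'⟩
    rwa [hK] at this
  let g : E →ₗ.[A] E := ⟨K.map d, w.comp (K.map d).subtype⟩
  have hdisj : Disjoint f.domain g.domain := by
    rw [Submodule.disjoint_def]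
    rintro _ hx ⟨k, hk, rfl⟩
    rw [← hdd, hd1 _ hx]
  have H := LinearPMap.sup_h_of_disjoint f g hdisj
  have hmem : f.sup g H ∈ {f : E →ₗ.[A] E | ∀ x : f.domain, f x ∈ f.domain → (x : E) = 0} := by
    rintro ⟨z, hz⟩ hz'
    obtain ⟨x, hx, _, ⟨k, hk, rfl⟩, rfl⟩ := Submodule.mem_sup.1 hz
    have hs := LinearPMap.sup_apply H ⟨x, hx⟩ ⟨d k, ⟨k, hk, rfl⟩⟩ ⟨x + d k, hz⟩ rfl
    have hz'' : f ⟨x, hx⟩ + w (d k) ∈ f.domain ⊔ K.map d := by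
      have e : f ⟨x, hx⟩ + w (d k) = f.sup g H ⟨x + d k, hz⟩ := hs.symm
      rw [e]
      exact hz'
    obtain ⟨x₂, hx₂, _, ⟨k₂, hk₂, rfl⟩, hxk⟩ := Submodule.mem_sup.1 hz''
    have hxk' : x₂ + d k₂ = f ⟨x, hx⟩ + w k := by
      rw [← hwd' k]; exact hxk
    have e1 : d k₂ = w k := by
      have := congrArg d hxk'
      simpa [hd1 x₂ hx₂, hd2, hdd, hdw'] using this
    have e2 : k₂ = 0 := by
      apply hK' _ hk₂
      rw [← hwd', e1, hww']
    have e3 : k = 0 := by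
      apply hK' _ hk
      rw [← e1, e2, map_zero]
    have e4 : x = 0 := by
      apply hfZ ⟨x, hx⟩
      have : x₂ = f ⟨x, hx⟩ := by simpa [e2, e3] using hxk'
      rw [← this]; exact hx₂
    simp [e3, e4]
  have hle := hf.2 hmem (LinearPMap.left_le_sup f g H)
  have hKd : K.map d ≤ f.domain := (LinearPMap.right_le_sup f g H).1.trans hle.1
  rw [Submodule.eq_bot_iff]
  intro k hk
  apply hK' k hk
  have h0 : d k = 0 := by
    rw [← hdd]; exact hd1 _ (hKd ⟨k, hk, rfl⟩)
  rw [← hwd', h0, map_zero]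

/-- Every element of the hull is the image of `1` under an endomorphism of the hull. -/
lemma exists_end {R : Type u} [Ring R] {E : Type u} [AddCommGroup E] [Module Rᵐᵒᵖ E]
    (i : R →ₗ[Rᵐᵒᵖ] E) (hi : Function.Injective i) (hinj : Module.Injective Rᵐᵒᵖ E) (x : E) :
    ∃ y : Module.End Rᵐᵒᵖ E, ∀ r, y (i r) = MulOpposite.op r • x :=
  hinj.out i hi
    { toFun := fun r => MulOpposite.op r • x
      map_add' := fun r s => by rw [MulOpposite.op_add, add_smul]
      map_smul' := fun s r => by
        rw [MulOpposite.smul_eq_mul_unop, MulOpposite.op_mul, mul_smul]; simp }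

lemma exists_value {R : Type u} [Ring R] {E : Type u} [AddCommGroup E] [Module Rᵐᵒᵖ E]
    (i : R →ₗ[Rᵐᵒᵖ] E) (hess : EssentialSub (LinearMap.range i)) (hE : NonsingularMod Rᵐᵒᵖ E)
    (s : Module.End Rᵐᵒᵖ E) (hs : s ≠ 0) : ∃ r m, s (i r) = i m ∧ i m ≠ 0 := by
  have h1 : LinearMap.range (s.comp i) ⊓ LinearMap.range i ≠ ⊥ := by
    intro h
    have h2 := hess _ h
    apply hs
    refine eq_zero_of_essential hE s _ hess ?_
    rintro _ ⟨r, rfl⟩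
    exact LinearMap.congr_fun (LinearMap.range_eq_bot.1 h2) r
  obtain ⟨z, ⟨⟨r, hr⟩, m, rfl⟩, hz0⟩ := Submodule.exists_mem_ne_zero_of_ne_bot h1
  exact ⟨r, m, hr, hz0⟩

end AutInvProof

/-- a prime right nonsingular right automorphism-invariant ring is right
self-injective. -/
theorem prime_nonsingular_autInvariant_selfInjective {R : Type u} [Ring R]
    (hprime : ∀ I J : TwoSidedIdeal R, (∀ x ∈ I, ∀ y ∈ J, x * y = 0) → I = ⊥ ∨ J = ⊥)
    (hns : NonsingularMod Rᵐᵒᵖ R)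
    (hinv : AutInvariant Rᵐᵒᵖ R) :
    Module.Injective Rᵐᵒᵖ R := by
  obtain ⟨E, _, _, i, hi⟩ := AutInvProof.exists_injectiveHull Rᵐᵒᵖ R
  have haut := hinv E i hi
  obtain ⟨hii, hinj, hess⟩ := hi
  have hE := AutInvProof.nonsingular_hull i hii hess hns
  have hzero : ∀ s : Module.End Rᵐᵒᵖ E, (∀ r, s (i r) = 0) → s = 0 := by
    intro s hs
    refine AutInvProof.eq_zero_of_essential hE s _ hess ?_
    rintro _ ⟨r, rfl⟩
    exact hs r
  have hop : ∀ r s : R, MulOpposite.op r • i s = i (s * r) := by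
    intro r s
    rw [← map_smul, MulOpposite.smul_eq_mul_unop, MulOpposite.unop_op]
  let T : Subring (Module.End Rᵐᵒᵖ E) :=
    { carrier := {s | ∀ r, s (i r) ∈ LinearMap.range i}
      mul_mem' := by
        intro s t hs ht r
        obtain ⟨m, hm⟩ := ht r
        rw [Module.End.mul_apply, ← hm]
        exact hs m
      one_mem' := fun r => ⟨r, rfl⟩
      add_mem' := fun {s t} hs ht r => Submodule.add_mem _ (hs r) (ht r)
      zero_mem' := fun r => Submodule.zero_mem _
      neg_mem' := fun {s} hs r => Submodule.neg_mem _ (hs r) }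
  have hT : ∀ u : (Module.End Rᵐᵒᵖ E)ˣ, (u : Module.End Rᵐᵒᵖ E) ∈ T := fun u r =>
    haut (LinearMap.GeneralLinearGroup.generalLinearEquiv _ _ u) r
  obtain ⟨a, b, d, haa, hbb, haba, hbab, hd, hM⟩ := AutInvProof.module_part hinj hE
  have hall := AutInvProof.ring_part T hT a b d haa hbb haba hbab hd (by
    intro s t hst
    by_contra! hcon
    obtain ⟨hs0, ht0⟩ := hcon
    obtain ⟨r, m, hr, hm⟩ := AutInvProof.exists_value i hess hE s hs0
    obtain ⟨r', m', hr', hm'⟩ := AutInvProof.exists_value i hess hE t ht0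
    rcases AutInvProof.prime_elem hprime m m' (by
      intro c
      obtain ⟨u, hu⟩ := AutInvProof.exists_end i hii hinj (i (r * c))
      have h1 : s (u (t (i r'))) = 0 := LinearMap.congr_fun (hst u) (i r')
      rw [hr', hu, hop, mul_assoc, ← hop, map_smul, hr, hop, ← mul_assoc] at h1
      exact hii (h1.trans (map_zero i).symm)) with h | h
    · exact hm (by rw [h, map_zero])
    · exact hm' (by rw [h, map_zero])) hM (by
    intro h hh hy
    have hdd : ∀ x : LinearMap.range d, h x = 0 → (x : E) = 0 := by
      rintro ⟨x, x₀, hx⟩ hx0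
      have hx0' : h x = 0 := hx0
      obtain ⟨y, hyx⟩ := AutInvProof.exists_end i hii hinj x₀
      have h1 : d * y = 0 := by
        apply hy
        · rw [← mul_assoc]
          congr 1
          have hda : d * a = 0 := by
            rw [hd, sub_mul, sub_mul, haba, mul_assoc, haa]; simp
          have hdb : d * b = 0 := by
            rw [hd, sub_mul, sub_mul, hbab, mul_assoc, hbb]; simp
          nth_rw 2 [hd]
          rw [mul_sub, mul_sub, ← mul_assoc, ← mul_assoc, hda, hdb]; simp
        · apply hzero
          intro r
          rw [Module.End.mul_apply, Module.End.mul_apply, hyx, map_smul, map_smul, hx, hx0',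
            smul_zero]
      have h2 : d (y (i 1)) = 0 := LinearMap.congr_fun h1 (i 1)
      rw [hyx, map_smul, hx] at h2
      simpa using h2
    obtain ⟨b', hb'⟩ := hinj.out (h.comp (LinearMap.range d).subtype) (by
      rw [← LinearMap.ker_eq_bot, LinearMap.ker_eq_bot']
      intro x hx
      exact Subtype.ext (hdd x hx)) (LinearMap.range d).subtype
    refine ⟨b', ?_⟩
    rw [← hh]
    ext x
    exact hb' ⟨d x, x, rfl⟩)
  have hsurj : Function.Surjective i := by
    intro x
    obtain ⟨y, hy⟩ := AutInvProof.exists_end i hii hinj x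
    obtain ⟨m, hm⟩ := hall y 1
    refine ⟨m, ?_⟩
    rw [hm, hy]; simp
  let e : R ≃ₗ[Rᵐᵒᵖ] E := LinearEquiv.ofBijective i ⟨hii, hsurj⟩
  refine ⟨fun X Y _ _ _ _ f hf g => ?_⟩
  obtain ⟨k, hk⟩ := hinj.out f hf (i.comp g)
  refine ⟨e.symm.toLinearMap.comp k, fun x => ?_⟩
  change e.symm (k (f x)) = g x
  rw [hk]
  exact e.symm_apply_apply (g x)
end

section
/- If R is a ring over which every cyclic right R-module is automorphism-invariant, then R ≅ S × T where S is semisimple artinian and T_T is square-free; moreover, for any two closed right ideals X, Y of T with X ∩ Y = 0, Hom(X,Y) = 0, and all idempotents of T are central. -/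
universe u v w

namespace CAI

section basics
variable {R : Type u} [Ring R] {M : Type v} [AddCommGroup M] [Module R M]

theorem ess_iff (N : Submodule R M) :
    EssentialSub N ↔ ∀ x : M, x ≠ 0 → ∃ r : R, r • x ≠ 0 ∧ r • x ∈ N := by
  constructor
  · intro h x hx
    by_contra! hc
    have := h (Submodule.span R {x}) (by
      rw [Submodule.eq_bot_iff]
      rintro y ⟨hy, hyN⟩
      obtain ⟨r, rfl⟩ := Submodule.mem_span_singleton.1 hy
      by_contra h0
      exact hc r h0 hyN)
    exact hx (by simpa using this)
  · intro h K hK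
    rw [Submodule.eq_bot_iff]
    intro x hx
    by_contra h0
    obtain ⟨r, hr, hrN⟩ := h x h0
    exact hr ((Submodule.eq_bot_iff _).1 hK _ ⟨K.smul_mem r hx, hrN⟩)

theorem essIn_iff (N P : Submodule R M) :
    EssentialIn N P ↔ N ≤ P ∧ ∀ x ∈ P, x ≠ 0 → ∃ r : R, r • x ≠ 0 ∧ r • x ∈ N := by
  constructor
  · rintro ⟨hle, h⟩
    refine ⟨hle, fun x hxP hx => ?_⟩
    by_contra! hc
    have := h (Submodule.span R {x}) (by simpa using hxP) (by
      rw [Submodule.eq_bot_iff]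
      rintro y ⟨hy, hyN⟩
      obtain ⟨r, rfl⟩ := Submodule.mem_span_singleton.1 hy
      by_contra h0
      exact hc r h0 hyN)
    exact hx (by simpa using this)
  · rintro ⟨hle, h⟩
    refine ⟨hle, fun K hKP hK => ?_⟩
    rw [Submodule.eq_bot_iff]
    intro x hx
    by_contra h0
    obtain ⟨r, hr, hrN⟩ := h x (hKP hx) h0
    exact hr ((Submodule.eq_bot_iff _).1 hK _ ⟨K.smul_mem r hx, hrN⟩)

theorem ess_mono {N P : Submodule R M} (h : N ≤ P) (hN : EssentialSub N) : EssentialSub P := by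
  rw [ess_iff] at *
  intro x hx
  obtain ⟨r, h1, h2⟩ := hN x hx
  exact ⟨r, h1, h h2⟩

theorem ess_inf {N P : Submodule R M} (hN : EssentialSub N) (hP : EssentialSub P) :
    EssentialSub (N ⊓ P) := by
  rw [ess_iff] at *
  intro x hx
  obtain ⟨r, h1, h2⟩ := hN x hx
  obtain ⟨s, h3, h4⟩ := hP _ h1
  exact ⟨s * r, by rwa [mul_smul], by rw [mul_smul]; exact ⟨N.smul_mem _ h2, h4⟩⟩

theorem ess_comap {M' : Type w} [AddCommGroup M'] [Module R M'] (f : M' →ₗ[R] M)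
    {N : Submodule R M} (hN : EssentialSub N) : EssentialSub (N.comap f) := by
  rw [ess_iff] at *
  intro x hx
  by_cases h0 : f x = 0
  · exact ⟨1, by simpa using hx, by simp [h0]⟩
  · obtain ⟨r, h1, h2⟩ := hN _ h0
    exact ⟨r, fun h => h1 (by rw [← map_smul, h, map_zero]), by simpa using h2⟩

theorem ess_top : EssentialSub (⊤ : Submodule R M) := by
  intro K hK; simpa using hK

/-- Relative complements. -/
theorem exists_compl (N : Submodule R M) :
    ∃ C : Submodule R M, N ⊓ C = ⊥ ∧ EssentialSub (N ⊔ C) ∧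
      ∀ C', C ≤ C' → N ⊓ C' = ⊥ → C' = C := by
  obtain ⟨C, hC⟩ := zorn_le₀ {C : Submodule R M | N ⊓ C = ⊥} (by
    intro c hc hchain
    rcases c.eq_empty_or_nonempty with rfl | hne
    · exact ⟨⊥, by simp, by simp⟩
    · refine ⟨sSup c, ?_, fun z hz => le_sSup hz⟩
      rw [Set.mem_ofPred_eq, Submodule.eq_bot_iff]
      rintro x ⟨hxN, hx⟩
      obtain ⟨y, hy, hxy⟩ := (Submodule.mem_sSup_of_directed hne hchain.directedOn).1 hx
      exact (Submodule.eq_bot_iff _).1 (hc hy) _ ⟨hxN, hxy⟩)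
  have hmax : ∀ C', C ≤ C' → N ⊓ C' = ⊥ → C' = C :=
    fun C' h1 h2 => le_antisymm (hC.2 (y := C') h2 h1) h1
  refine ⟨C, hC.1, ?_, hmax⟩
  intro K hK
  have h1 : N ⊓ (C ⊔ K) = ⊥ := by
    rw [Submodule.eq_bot_iff]
    rintro x ⟨hxN, hx⟩
    obtain ⟨c, hc, k, hk, rfl⟩ := Submodule.mem_sup.1 hx
    have hk0 : k = 0 := (Submodule.eq_bot_iff _).1 hK _ ⟨hk, by
      have : k = (c + k) - c := by abel
      rw [this]
      exact Submodule.sub_mem _ (Submodule.mem_sup_left hxN) (Submodule.mem_sup_right hc)⟩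
    subst hk0
    exact (Submodule.eq_bot_iff _).1 hC.1 _ ⟨hxN, by simpa using hc⟩
  have h2 := hmax _ le_sup_left h1
  have h3 : K ≤ C := by rw [← h2]; exact le_sup_right
  rw [eq_bot_iff, ← hK]
  exact le_inf le_rfl (h3.trans le_sup_right)

theorem inj_of_ess {M' : Type w} [AddCommGroup M'] [Module R M'] (f : M →ₗ[R] M')
    {N : Submodule R M} (hN : EssentialSub N) (h : ∀ x ∈ N, f x = 0 → x = 0) :
    Function.Injective f := by
  rw [← LinearMap.ker_eq_bot]
  apply hN
  rw [Submodule.eq_bot_iff]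
  rintro x ⟨h1, h2⟩
  exact h x h2 h1

end basics

section inj
variable {R : Type u} [Ring R] 

theorem inj_of_retract {Q E : Type u} [AddCommGroup Q] [Module R Q] [AddCommGroup E] [Module R E]
    (hQ : Module.Injective R Q) (i : E →ₗ[R] Q) (r : Q →ₗ[R] E) (h : ∀ x, r (i x) = x) :
    Module.Injective R E := by
  refine ⟨fun X Y _ _ _ _ f hf g => ?_⟩
  obtain ⟨k, hk⟩ := hQ.out f hf (i ∘ₗ g)
  exact ⟨r ∘ₗ k, fun x => by simp [hk, h]⟩

theorem inj_prod {Q E : Type u} [AddCommGroup Q] [Module R Q] [AddCommGroup E] [Module R E]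
    (hQ : Module.Injective R Q) (hE : Module.Injective R E) : Module.Injective R (Q × E) := by
  refine ⟨fun X Y _ _ _ _ f hf g => ?_⟩
  obtain ⟨k, hk⟩ := hQ.out f hf (LinearMap.fst R Q E ∘ₗ g)
  obtain ⟨l, hl⟩ := hE.out f hf (LinearMap.snd R Q E ∘ₗ g)
  exact ⟨k.prod l, fun x => by simp [hk, hl]⟩

theorem inj_equiv {Q E : Type u} [AddCommGroup Q] [Module R Q] [AddCommGroup E] [Module R E]
    (hQ : Module.Injective R Q) (e : Q ≃ₗ[R] E) : Module.Injective R E :=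
  inj_of_retract hQ e.symm.toLinearMap e.toLinearMap (by simp)

/-- an injective module embedded anywhere splits -/
theorem inj_split {Q E : Type u} [AddCommGroup Q] [Module R Q] [AddCommGroup E] [Module R E]
    (hE : Module.Injective R E) (i : E →ₗ[R] Q) (hi : Function.Injective i) :
    ∃ r : Q →ₗ[R] E, ∀ x, r (i x) = x := by
  obtain ⟨k, hk⟩ := hE.out i hi LinearMap.id
  exact ⟨k, fun x => by simp [hk]⟩

/-- essential submodules of the range of an injective module force surjectivity -/
theorem surj_of_ess {Q E : Type u} [AddCommGroup Q] [Module R Q] [AddCommGroup E] [Module R E]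
    (hE : Module.Injective R E) (i : E →ₗ[R] Q) (hi : Function.Injective i)
    (hess : EssentialSub (LinearMap.range i)) : Function.Surjective i := by
  obtain ⟨r, hr⟩ := inj_split hE i hi
  have hk : LinearMap.ker r = ⊥ := by
    apply hess
    rw [Submodule.eq_bot_iff]
    rintro x ⟨h1, y, rfl⟩
    have : r (i y) = 0 := h1
    rw [hr] at this; simp [this]
  intro y
  refine ⟨r y, ?_⟩
  have : r (i (r y)) = r y := hr _
  exact LinearMap.ker_eq_bot.1 hk this

theorem exists_inj (M : Type u) [AddCommGroup M] [Module R M] :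
    ∃ (Q : Type u) (_ : AddCommGroup Q) (_ : Module R Q) (i : M →ₗ[R] Q),
      Function.Injective i ∧ Module.Injective R Q := by
  obtain ⟨J⟩ := (inferInstance : CategoryTheory.EnoughInjectives (ModuleCat.{u} R)).presentation
    (ModuleCat.of R M)
  refine ⟨J.J, inferInstance, inferInstance, J.f.hom, ?_, ?_⟩
  · exact (ModuleCat.mono_iff_injective J.f).1 J.mono
  · have := J.injective
    exact (Module.injective_iff_injective_object R J.J).2 (by simpa using this)

/-- Hulls inside injective modules. -/
theorem hull_in {Q : Type u} [AddCommGroup Q] [Module R Q] (hQ : Module.Injective R Q)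
    (N : Submodule R Q) : ∃ E : Submodule R Q, EssentialIn N E ∧ Module.Injective R E := by
  obtain ⟨E, hNE, hE⟩ := zorn_le_nonempty₀ {E : Submodule R Q | EssentialIn N E} (by
    intro c hc hchain y hy
    refine ⟨sSup c, ?_, fun z hz => le_sSup hz⟩
    rw [Set.mem_ofPred_eq, essIn_iff]
    refine ⟨(hc hy).1.trans (le_sSup hy), fun x hx h0 => ?_⟩
    obtain ⟨z, hz, hxz⟩ := (Submodule.mem_sSup_of_directed ⟨y, hy⟩ hchain.directedOn).1 hx
    exact ((essIn_iff _ _).1 (hc hz)).2 x hxz h0) N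
    ⟨le_rfl, fun K hK h => by rwa [inf_eq_left.2 hK] at h⟩
  have hE1 : EssentialIn N E := hE.1
  refine ⟨E, hE1, ?_⟩
  obtain ⟨C, hC1, hC2, hC3⟩ := exists_compl E
  -- E → Q / C
  set j : E →ₗ[R] Q ⧸ C := C.mkQ ∘ₗ E.subtype with hj
  have hjinj : Function.Injective j := by
    rw [← LinearMap.ker_eq_bot, Submodule.eq_bot_iff]
    intro x hx
    have hx' : (x : Q) ∈ C := by simpa [hj] using hx
    have := (Submodule.eq_bot_iff _).1 hC1 _ ⟨x.2, hx'⟩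
    exact Subtype.ext this
  obtain ⟨g, hg⟩ := hQ.out j hjinj E.subtype
  have hjess : EssentialSub (LinearMap.range j) := by
    intro K hK
    have h1 : K.comap C.mkQ = C := by
      apply hC3
      · intro x hx; simp [(Submodule.Quotient.mk_eq_zero C).2 hx]
      · rw [Submodule.eq_bot_iff]
        rintro x ⟨hxE, hx⟩
        have : C.mkQ x = 0 := (Submodule.eq_bot_iff _).1 hK _ ⟨hx, ⟨x, hxE⟩, rfl⟩
        have hx' : x ∈ C := by simpa using this
        exact (Submodule.eq_bot_iff _).1 hC1 _ ⟨hxE, hx'⟩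
    rw [Submodule.eq_bot_iff]
    intro y hy
    obtain ⟨x, rfl⟩ := C.mkQ_surjective y
    have : x ∈ K.comap C.mkQ := hy
    rw [h1] at this
    simpa using this
  have hginj : Function.Injective g := by
    apply inj_of_ess g hjess
    rintro _ ⟨x, rfl⟩ hx
    rw [hg] at hx
    have : x = 0 := Subtype.ext hx
    simp [this]
  have hEle : E ≤ LinearMap.range g := fun x hx => ⟨j ⟨x, hx⟩, hg ⟨x, hx⟩⟩
  have hrange : EssentialIn N (LinearMap.range g) := by
    rw [essIn_iff]
    refine ⟨hE1.1.trans hEle, ?_⟩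
    rintro _ ⟨y, rfl⟩ h0
    have hy : y ≠ 0 := fun h => h0 (by simp [h])
    obtain ⟨r, hr, e, he⟩ := (ess_iff _).1 hjess y hy
    have hre : r • g y = e := by rw [← map_smul, ← he, hg]; rfl
    have he0 : (e : Q) ≠ 0 := by
      intro h
      have : e = 0 := Subtype.ext h
      rw [this, map_zero] at he
      exact hr he.symm
    obtain ⟨s, hs, hs'⟩ := ((essIn_iff _ _).1 hE1).2 _ e.2 he0
    exact ⟨s * r, by rwa [mul_smul, hre], by rwa [mul_smul, hre]⟩
  have hle : LinearMap.range g ≤ E := hE.2 hrange hEle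
  refine inj_of_retract hQ E.subtype
    (LinearMap.codRestrict E (g ∘ₗ C.mkQ) fun x => hle ⟨_, rfl⟩) (fun x => Subtype.ext (hg x))

theorem exists_hull (M : Type u) [AddCommGroup M] [Module R M] :
    ∃ (E : Type u) (_ : AddCommGroup E) (_ : Module R E) (i : M →ₗ[R] E), IsInjectiveHull i := by
  obtain ⟨Q, _, _, i, hi, hQ⟩ := exists_inj (R := R) M
  obtain ⟨E, hE, hE'⟩ := hull_in hQ (LinearMap.range i)
  refine ⟨E, inferInstance, inferInstance,
    LinearMap.codRestrict E i fun x => hE.1 ⟨x, rfl⟩, ⟨?_, hE', ?_⟩⟩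
  · intro x y h
    exact hi (congrArg Subtype.val h)
  · rw [ess_iff]
    intro x hx
    obtain ⟨r, h1, m, hm⟩ := ((essIn_iff _ _).1 hE).2 x x.2 (fun h => hx (Subtype.ext h))
    exact ⟨r, fun h => h1 (congrArg Subtype.val h), m, Subtype.ext hm⟩

/-- Isomorphisms between essential submodules of an automorphism-invariant module extend. -/
theorem autInv_extend {M : Type u} [AddCommGroup M] [Module R M] (hM : AutInvariant R M)
    {P : Type u} [AddCommGroup P] [Module R P] (k φ : P →ₗ[R] M)
    (hk : Function.Injective k) (hφ : Function.Injective φ)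
    (hk' : EssentialSub (LinearMap.range k)) (hφ' : EssentialSub (LinearMap.range φ)) :
    ∃ ψ : M ≃ₗ[R] M, ∀ x, ψ (k x) = φ x := by
  obtain ⟨E, _, _, i, hi⟩ := exists_hull (R := R) M
  have hE := hi.injE
  obtain ⟨g, hg⟩ := hE.out (i ∘ₗ k) (hi.inj.comp hk) (i ∘ₗ φ)
  have hmap : ∀ k : P →ₗ[R] M, EssentialSub (LinearMap.range k) →
      EssentialSub (LinearMap.range (i ∘ₗ k)) := by
    intro k hk
    rw [ess_iff]
    intro x hx
    obtain ⟨r, h1, m, hm⟩ := (ess_iff _).1 hi.ess x hx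
    have hm0 : m ≠ 0 := fun h => h1 (by rw [← hm, h, map_zero])
    obtain ⟨s, h2, p, hp⟩ := (ess_iff _).1 hk m hm0
    refine ⟨s * r, ?_, p, ?_⟩
    · rw [mul_smul, ← hm, ← map_smul]
      exact fun h => h2 (hi.inj (by simpa using h))
    · rw [mul_smul, ← hm, ← map_smul, ← hp]; rfl
  have hginj : Function.Injective g := by
    apply inj_of_ess g (hmap k hk')
    rintro _ ⟨x, rfl⟩ hx
    rw [hg] at hx
    have : x = 0 := hφ (hi.inj (by simpa using hx))
    simp [this]
  have hgsurj : Function.Surjective g := by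
    apply surj_of_ess hE g hginj
    refine ess_mono ?_ (hmap φ hφ')
    rintro _ ⟨x, rfl⟩
    exact ⟨_, hg x⟩
  let G : E ≃ₗ[R] E := LinearEquiv.ofBijective g ⟨hginj, hgsurj⟩
  have h1 := hM E i hi G
  have h2 := hM E i hi G.symm
  choose a ha using h1
  choose b hb using h2
  have hab : ∀ m, a (b m) = m := fun m => hi.inj (by rw [ha, hb]; simp)
  have hba : ∀ m, b (a m) = m := fun m => hi.inj (by rw [hb, ha]; simp)
  let A : M →ₗ[R] M :=
    { toFun := a
      map_add' := fun x y => hi.inj (by simp [ha])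
      map_smul' := fun r x => hi.inj (by simp [ha]) }
  refine ⟨LinearEquiv.ofBijective A ⟨fun x y h => ?_, fun y => ⟨b y, hab y⟩⟩, fun x => ?_⟩
  · have : a x = a y := h
    rw [← hba x, this, hba]
  · apply hi.inj
    change i (a (k x)) = _
    rw [ha]
    exact hg x

end inj
end CAI

namespace CAI

section rel
variable {R : Type u} [Ring R] 

theorem relInj_of_prod {X Y : Type u} [AddCommGroup X] [Module R X] [AddCommGroup Y] [Module R Y]
    (h : AutInvariant R (X × Y)) : RelInjective R X Y := by
  intro A f
  obtain ⟨C, hC1, hC2, -⟩ := exists_compl A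
  let s : (A × C) →ₗ[R] Y := A.subtype.coprod C.subtype
  let k : (X × (A × C)) →ₗ[R] X × Y := LinearMap.id.prodMap s
  let n : (X × (A × C)) →ₗ[R] X × (A × C) :=
    LinearMap.id + LinearMap.inl R X (A × C) ∘ₗ f ∘ₗ LinearMap.fst R A C ∘ₗ LinearMap.snd R X (A × C)
  let n' : (X × (A × C)) →ₗ[R] X × (A × C) :=
    LinearMap.id - LinearMap.inl R X (A × C) ∘ₗ f ∘ₗ LinearMap.fst R A C ∘ₗ LinearMap.snd R X (A × C)
  have hn : ∀ x, n' (n x) = x := by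
    rintro ⟨x, a, c⟩; simp [n, n']
  have hn' : ∀ x, n (n' x) = x := by
    rintro ⟨x, a, c⟩; simp [n, n']
  have hs : Function.Injective s := by
    rw [← LinearMap.ker_eq_bot, Submodule.eq_bot_iff]
    rintro ⟨a, c⟩ h
    have h : (a : Y) + c = 0 := h
    have ha : (a : Y) ∈ C := by
      rw [eq_neg_of_add_eq_zero_left h]; exact C.neg_mem c.2
    have ha0 : (a : Y) = 0 := (Submodule.eq_bot_iff _).1 hC1 _ ⟨a.2, ha⟩
    rw [ha0, zero_add] at h
    exact Prod.ext (Subtype.ext ha0) (Subtype.ext h)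
  have hk : Function.Injective k := by
    rintro ⟨x, y⟩ ⟨x', y'⟩ h
    have h := Prod.ext_iff.1 h
    exact Prod.ext h.1 (hs h.2)
  have hkr : EssentialSub (LinearMap.range k) := by
    refine ess_mono ?_ (ess_comap (LinearMap.snd R X Y) hC2)
    rintro ⟨x, y⟩ hy
    obtain ⟨a, ha, c, hc, hac⟩ := Submodule.mem_sup.1 hy
    exact ⟨(x, ⟨a, ha⟩, ⟨c, hc⟩), Prod.ext rfl hac⟩
  obtain ⟨ψ, hψ⟩ := autInv_extend h k (k ∘ₗ n) hk
    (hk.comp (Function.LeftInverse.injective hn)) hkr (by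
      refine ess_mono ?_ hkr
      rintro _ ⟨x, rfl⟩
      exact ⟨n' x, by simp [hn']⟩)
  refine ⟨LinearMap.fst R X Y ∘ₗ ψ.toLinearMap ∘ₗ LinearMap.inr R X Y, fun a => ?_⟩
  have h1 := hψ (0, a, 0)
  have h2 : k (0, a, 0) = (0, (a : Y)) := by simp [k, s]
  rw [h2] at h1
  have h3 := congrArg Prod.fst h1
  simpa [n, k, s] using h3

theorem square_decomp {M : Type u} [AddCommGroup M] [Module R M] (hM : AutInvariant R M)
    (A B : Submodule R M) (hAB : A ⊓ B = ⊥) (φ : A ≃ₗ[R] B) :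
    ∃ p q : M →ₗ[R] M, (∀ x, p (p x) = 0) ∧ (∀ x, q (q x) = 0) ∧ (∀ x, p (q (p x)) = p x) ∧
      (∀ x, q (p (q x)) = q x) ∧ (∀ a : A, q a = φ a) ∧ (∀ a : A, p (φ a) = a) := by
  obtain ⟨E, _, _, i, hi⟩ := exists_hull (R := R) M
  have hE := hi.injE
  obtain ⟨E1, hE1, hE1inj⟩ := hull_in hE (A.map i)
  let k : A →ₗ[R] E1 := LinearMap.codRestrict E1 (i ∘ₗ A.subtype)
    fun a => hE1.1 ⟨a, a.2, rfl⟩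
  have hkinj : Function.Injective k := by
    intro a b h
    exact Subtype.ext (hi.inj (congrArg Subtype.val h))
  have hkess : EssentialSub (LinearMap.range k) := by
    rw [ess_iff]
    intro x hx
    obtain ⟨r, h1, m, hm, hm'⟩ := ((essIn_iff _ _).1 hE1).2 x x.2 (fun h => hx (Subtype.ext h))
    exact ⟨r, fun h => h1 (congrArg Subtype.val h), ⟨m, hm⟩, Subtype.ext hm'⟩
  obtain ⟨h, hh⟩ := hE.out k hkinj (i ∘ₗ B.subtype ∘ₗ φ.toLinearMap)
  have hhinj : Function.Injective h := by
    apply inj_of_ess h hkess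
    rintro _ ⟨x, rfl⟩ hx
    rw [hh] at hx
    have h1 : (φ x : M) = 0 := hi.inj (by simpa using hx)
    have h2 : φ x = 0 := Subtype.ext h1
    have : x = 0 := by simpa using h2
    simp [this]
  let j : (E1 × E1) →ₗ[R] E := E1.subtype.coprod h
  have hkey : ∀ x y : E1, (x : E) = h y → y = 0 := by
    intro x y hxy
    by_contra hy
    have hx : x ≠ 0 := by
      rintro rfl
      exact hy (hhinj (by simpa using hxy.symm))
    obtain ⟨r, hr, a, ha⟩ := (ess_iff _).1 hkess x hx
    have hry : r • y ≠ 0 := by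
      intro h0
      apply hr
      apply Subtype.ext
      simp [hxy, ← map_smul, h0]
    obtain ⟨s, hs, b, hb⟩ := (ess_iff _).1 hkess _ hry
    have h1 : i ((s • a : A) : M) = i (φ b) := by
      have e1 : i (φ b) = h (k b) := (hh b).symm
      have e2 : i ((s • a : A) : M) = (k (s • a) : E1) := rfl
      rw [e1, e2, hb, map_smul, map_smul, map_smul, ha, ← hxy]
      rfl
    have h2 := hi.inj h1
    have h3 : (φ b : M) = 0 := (Submodule.eq_bot_iff _).1 hAB _ ⟨by rw [← h2]; exact (s • a).2, (φ b).2⟩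
    have h4 : φ b = 0 := Subtype.ext h3
    have h5 : b = 0 := by simpa using h4
    rw [h5, map_zero] at hb
    exact hs hb.symm
  have hj : Function.Injective j := by
    rw [← LinearMap.ker_eq_bot, Submodule.eq_bot_iff]
    rintro ⟨x, y⟩ hxy
    have hxy : (x : E) + h y = 0 := hxy
    have hy : y = 0 := by
      have := hkey x (-y) (by rw [map_neg]; exact eq_neg_of_add_eq_zero_left hxy)
      simpa using this
    subst hy
    simp at hxy
    simp [hxy]
  obtain ⟨ρ, hρ⟩ := inj_split (inj_prod hE1inj hE1inj) j hj
  have hN : ∀ N : E →ₗ[R] E, (∀ x, N (N x) = 0) → ∀ m, ∃ m', i m' = N (i m) := by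
    intro N hN m
    let g : E ≃ₗ[R] E := LinearEquiv.ofLinear (LinearMap.id + N) (LinearMap.id - N)
      (by ext x; simp [hN]) (by ext x; simp [hN])
    obtain ⟨m', hm'⟩ := hM E i hi g m
    refine ⟨m' - m, ?_⟩
    rw [map_sub, hm']
    simp [g]
  have hlift : ∀ N : E →ₗ[R] E, (∀ x, N (N x) = 0) → ∃ p : M →ₗ[R] M, ∀ m, i (p m) = N (i m) := by
    intro N h
    choose a ha using hN N h
    exact ⟨{ toFun := a
             map_add' := fun x y => hi.inj (by simp [ha])
             map_smul' := fun r x => hi.inj (by simp [ha]) }, ha⟩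
  let P : E →ₗ[R] E := j ∘ₗ (LinearMap.inl R E1 E1 ∘ₗ LinearMap.snd R E1 E1) ∘ₗ ρ
  let Q : E →ₗ[R] E := j ∘ₗ (LinearMap.inr R E1 E1 ∘ₗ LinearMap.fst R E1 E1) ∘ₗ ρ
  have hP : ∀ x, P x = j ((ρ x).2, 0) := fun x => rfl
  have hQ : ∀ x, Q x = j (0, (ρ x).1) := fun x => rfl
  obtain ⟨p, hp⟩ := hlift P (fun x => by rw [hP, hP, hρ]; exact map_zero j)
  obtain ⟨q, hq⟩ := hlift Q (fun x => by rw [hQ, hQ, hρ]; exact map_zero j)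
  refine ⟨p, q, ?_, ?_, ?_, ?_, ?_, ?_⟩
  · intro x; apply hi.inj; rw [hp, hp, hP, hP, hρ, map_zero]; exact map_zero j
  · intro x; apply hi.inj; rw [hq, hq, hQ, hQ, hρ, map_zero]; exact map_zero j
  · intro x; apply hi.inj; rw [hp, hq, hp, hP, hQ, hP, hρ, hρ]
  · intro x; apply hi.inj; rw [hq, hp, hq, hQ, hP, hQ, hρ, hρ]
  · intro a
    apply hi.inj
    have h1 : i a = j (k a, 0) := by simp [j, k]
    rw [hq, h1, hQ, hρ]
    simp [j, hh]
  · intro a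
    apply hi.inj
    have h1 : i (φ a) = j (0, k a) := by simp [j, hh]
    rw [hp, h1, hP, hρ]
    simp [j, k]

/-- relative injectivity over a sum -/
theorem relInj_sum {Q M : Type u} [AddCommGroup Q] [Module R Q] [AddCommGroup M] [Module R M]
    (e : M →ₗ[R] M) (he : ∀ x, e (e x) = e x)
    (h1 : RelInjective R Q (LinearMap.range e)) (h2 : RelInjective R Q (LinearMap.ker e)) :
    RelInjective R Q M := by
  intro A f
  obtain ⟨g1, hg1⟩ := h1 (A.comap (LinearMap.range e).subtype)
    (f ∘ₗ LinearMap.restrict (LinearMap.range e).subtype (fun x hx => hx))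
  have hg1' : ∀ (y : LinearMap.range e) (hy : (y : M) ∈ A), g1 y = f ⟨y, hy⟩ := fun y hy =>
    hg1 ⟨y, hy⟩
  -- extend to A × range e
  let t : (A × LinearMap.range e) →ₗ[R] M := A.subtype.coprod (LinearMap.range e).subtype
  let ft : (A × LinearMap.range e) →ₗ[R] Q := f.coprod g1
  have hker : ∀ z, t z = 0 → ft z = 0 := by
    rintro ⟨a, y⟩ hz
    have hz : (a : M) + y = 0 := hz
    have hy : (y : M) = -a := eq_neg_of_add_eq_zero_right hz
    have hyA : (y : M) ∈ A := by rw [hy]; exact A.neg_mem a.2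
    have h3 : (⟨y, hyA⟩ : A) = -a := Subtype.ext hy
    simp [ft, hg1' y hyA, h3]
  let e1 : M →ₗ[R] LinearMap.range e := e.rangeRestrict
  let e2 : M →ₗ[R] LinearMap.ker e := LinearMap.codRestrict _ (LinearMap.id - e)
    (fun x => by simp [he])
  -- submodule of ker e: those in A + range e
  let D : Submodule R (LinearMap.ker e) := (LinearMap.range t).comap (LinearMap.ker e).subtype
  have hD : ∀ d : D, ∃ z, t z = ((d : LinearMap.ker e) : M) := fun d => d.2
  choose zz hzz using hD
  have hwd : ∀ z z', t z = t z' → ft z = ft z' := by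
    intro z z' h
    have := hker (z - z') (by rw [map_sub, h, sub_self])
    rwa [map_sub, sub_eq_zero] at this
  let fD : D →ₗ[R] Q :=
    { toFun := fun d => ft (zz d)
      map_add' := fun x y => by
        rw [← map_add]; apply hwd; rw [map_add, hzz, hzz, hzz]; rfl
      map_smul' := fun r x => by
        rw [RingHom.id_apply, ← map_smul]; apply hwd; rw [map_smul, hzz, hzz]; rfl }
  obtain ⟨g2, hg2⟩ := h2 D fD
  refine ⟨g1 ∘ₗ e1 + g2 ∘ₗ e2, fun a => ?_⟩
  have hmem : t (a, - e1 a) = (e2 a : M) := by simp [t, e1, e2]; abel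
  have h3 : g2 (e2 a) = ft (a, - e1 a) := by
    rw [hg2 ⟨e2 a, ⟨_, hmem⟩⟩]
    apply hwd
    rw [hzz, hmem]
  simp [h3, ft]

theorem inj_of_relInj {Q : Type u} [AddCommGroup Q] [Module R Q] (h : RelInjective R Q R) :
    Module.Injective R Q := by
  apply Module.Baer.injective
  intro I g
  obtain ⟨g', hg'⟩ := h I g
  exact ⟨g', fun x hx => hg' ⟨x, hx⟩⟩

end rel
end CAI

namespace CAI

section osofsky
variable {R : Type u} [Ring R] {P : Type u} [AddCommGroup P] [Module R P]

theorem delta_zero (hproj : Module.Projective R P)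
    (hsub : ∀ N : Submodule R P, N ≠ ⊥ → ∃ S ≤ N, S ≠ ⊥ ∧ Module.Injective R S)
    (d : P →ₗ[R] P) (hd : EssentialSub (LinearMap.ker d)) : d = 0 := by
  by_contra h0
  obtain ⟨S, hS, hS0, hSi⟩ := hsub (LinearMap.range d) (by simpa [LinearMap.range_eq_bot] using h0)
  obtain ⟨r, hr⟩ := inj_split hSi S.subtype S.injective_subtype
  obtain ⟨σ, hσ⟩ := Module.projective_lifting_property d.rangeRestrict
    (Submodule.inclusion hS ∘ₗ r) d.surjective_rangeRestrict
  have h1 : ∀ x, d (σ x) = r x := fun x => congrArg Subtype.val (LinearMap.congr_fun hσ x)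
  have h2 : S.map σ = ⊥ := by
    apply hd
    rw [Submodule.eq_bot_iff]
    rintro _ ⟨⟨s, hs, rfl⟩, hk⟩
    have h3 : d (σ s) = 0 := hk
    have h4 : (r s : P) = s := congrArg Subtype.val (hr ⟨s, hs⟩)
    rw [h1, h4] at h3
    simp [h3]
  apply hS0
  rw [Submodule.eq_bot_iff] at h2 ⊢
  intro s hs
  have h3 := h2 _ ⟨s, hs, rfl⟩
  have h4 : (r s : P) = s := congrArg Subtype.val (hr ⟨s, hs⟩)
  rw [← h4, ← h1, h3, map_zero]

theorem osofsky_core (hproj : Module.Projective R P) (w : P)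
    (hw : ∀ f : P →ₗ[R] P, f w = 0 → f = 0)
    (hquot : ∀ N : Submodule R P, Module.Injective R (P ⧸ N))
    (hsub : ∀ N : Submodule R P, N ≠ ⊥ → ∃ S ≤ N, S ≠ ⊥ ∧ Module.Injective R S)
    (p : ℕ × ℕ → Submodule R P) (hind : iSupIndep p) (hne : ∀ n, p n ≠ ⊥)
    (hinj : ∀ n, Module.Injective R (p n)) : False := by
  classical
  have hPinj : Module.Injective R P :=
    inj_equiv (hquot ⊥) (Submodule.quotEquivOfEqBot ⊥ rfl)
  set I : Submodule R P := ⨆ n, p n with hI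
  obtain ⟨C, hC1, hC2, -⟩ := exists_compl I
  have hext : ∀ f g : P →ₗ[R] P, (∀ n, ∀ y ∈ p n, f y = g y) → (∀ y ∈ C, f y = g y) → f = g := by
    intro f g h1 h2
    rw [← sub_eq_zero]
    apply delta_zero hproj hsub
    refine ess_mono ?_ hC2
    refine sup_le (iSup_le fun n y hy => ?_) (fun y hy => ?_)
    · simp [h1 n y hy]
    · simp [h2 y hy]
  let k0 : (Π₀ n, p n) →ₗ[R] P := DFinsupp.lsum ℕ fun n => (p n).subtype
  have hk0 : Function.Injective k0 := hind.dfinsupp_lsum_injective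
  have hk0r : ∀ z, k0 z ∈ I := by
    intro z
    have : k0 z ∈ LinearMap.range k0 := ⟨z, rfl⟩
    rw [hI, Submodule.iSup_eq_range_dfinsupp_lsum]
    exact this
  let k : ((Π₀ n, p n) × C) →ₗ[R] P := k0.coprod C.subtype
  have hk : Function.Injective k := by
    rw [← LinearMap.ker_eq_bot, Submodule.eq_bot_iff]
    rintro ⟨z, c⟩ hz
    have hz : k0 z + (c : P) = 0 := hz
    have hc : (c : P) = 0 := by
      refine (Submodule.eq_bot_iff _).1 hC1 _ ⟨?_, c.2⟩
      rw [eq_neg_of_add_eq_zero_right hz]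
      exact I.neg_mem (hk0r z)
    rw [hc, add_zero] at hz
    exact Prod.ext (hk0 (by simpa using hz)) (Subtype.ext hc)
  have hk_single : ∀ n (y : p n), k (DFinsupp.single n y, 0) = y := by
    intro n y; simp [k, k0]
  have hk_C : ∀ c : C, k (0, c) = c := by
    intro c; simp [k, k0]
  have hEex : ∀ A : Set (ℕ × ℕ), ∃ f : P →ₗ[R] P, (∀ n ∈ A, ∀ y ∈ p n, f y = y) ∧
      (∀ n ∉ A, ∀ y ∈ p n, f y = 0) ∧ ∀ y ∈ C, f y = 0 := by
    intro A
    obtain ⟨f, hf⟩ := hPinj.out k hk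
      ((DFinsupp.lsum ℕ fun n => if n ∈ A then (p n).subtype else 0) ∘ₗ
        LinearMap.fst R (Π₀ n, p n) C)
    refine ⟨f, fun n hn y hy => ?_, fun n hn y hy => ?_, fun y hy => ?_⟩
    · have := hf (DFinsupp.single n ⟨y, hy⟩, 0)
      rw [hk_single] at this
      simpa [hn] using this
    · have := hf (DFinsupp.single n ⟨y, hy⟩, 0)
      rw [hk_single] at this
      simpa [hn] using this
    · have := hf (0, ⟨y, hy⟩)
      rw [hk_C] at this
      simpa using this
  choose E hE1 hE0 hEC using hEex
  have heex : ∀ n, ∃ f : P →ₗ[R] P, (∀ y, f y ∈ p n) ∧ (∀ y ∈ p n, f y = y) ∧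
      (∀ m, m ≠ n → ∀ y ∈ p m, f y = 0) ∧ ∀ y ∈ C, f y = 0 := by
    intro n
    obtain ⟨f, hf⟩ := (hinj n).out k hk
      (DFinsupp.lapply n ∘ₗ LinearMap.fst R (Π₀ n, p n) C)
    refine ⟨(p n).subtype ∘ₗ f, fun y => (f y).2, fun y hy => ?_, fun m hm y hy => ?_,
      fun y hy => ?_⟩
    · have := hf (DFinsupp.single n ⟨y, hy⟩, 0)
      rw [hk_single] at this
      simp only [LinearMap.comp_apply, Submodule.subtype_apply]
      rw [this]
      simp
    · have := hf (DFinsupp.single m ⟨y, hy⟩, 0)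
      rw [hk_single] at this
      simp only [LinearMap.comp_apply, Submodule.subtype_apply]
      rw [this]
      simp [DFinsupp.single_apply, hm]
    · have := hf (0, ⟨y, hy⟩)
      rw [hk_C] at this
      simp only [LinearMap.comp_apply, Submodule.subtype_apply]
      rw [this]
      simp
  choose e he_mem he1 he0 heC using heex
  have hEE : ∀ A B y, E A (E B y) = E (A ∩ B) y := by
    intro A B y
    have : E A ∘ₗ E B = E (A ∩ B) := by
      apply hext
      · intro n y hy
        by_cases hB : n ∈ B
        · by_cases hA : n ∈ A
          · simp [hE1 B n hB y hy, hE1 A n hA y hy, hE1 (A ∩ B) n ⟨hA, hB⟩ y hy]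
          · simp [hE1 B n hB y hy, hE0 A n hA y hy, hE0 (A ∩ B) n (fun h => hA h.1) y hy]
        · simp [hE0 B n hB y hy, hE0 (A ∩ B) n (fun h => hB h.2) y hy]
      · intro y hy
        simp [hEC _ y hy]
    exact LinearMap.congr_fun this y
  have hEsub : ∀ A B : Set (ℕ × ℕ), B ⊆ A → ∀ y, E A (E B y) = E B y := by
    intro A B h y
    rw [hEE, Set.inter_eq_right.2 h]
  have hEfin : ∀ A : Set (ℕ × ℕ), A.Finite → ∀ y, E A y ∈ I := by
    intro A hA y
    have : E A = ∑ n ∈ hA.toFinset, e n := by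
      apply hext
      · intro m y hy
        rw [LinearMap.sum_apply]
        by_cases hm : m ∈ A
        · rw [hE1 A m hm y hy, Finset.sum_eq_single m, he1 m y hy]
          · intro b _ hb; exact he0 b m hb.symm y hy
          · intro h; exact absurd (hA.mem_toFinset.2 hm) h
        · rw [hE0 A m hm y hy, Finset.sum_eq_zero]
          intro b hb
          refine he0 b m ?_ y hy
          rintro rfl
          exact hm (hA.mem_toFinset.1 hb)
      · intro y hy
        rw [LinearMap.sum_apply, hEC A y hy, Finset.sum_eq_zero]
        intro b _; exact heC b y hy
    rw [this, LinearMap.sum_apply]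
    exact Submodule.sum_mem _ fun n _ => Submodule.mem_iSup_of_mem n (he_mem n y)
  have hEI : ∀ A, ∀ y ∈ I, E A y ∈ I := by
    intro A y hy
    have : I ≤ I.comap (E A) := by
      rw [hI]
      refine iSup_le fun n y hy => ?_
      by_cases hn : n ∈ A
      · simp only [Submodule.mem_comap, hE1 A n hn y hy]
        exact Submodule.mem_iSup_of_mem n hy
      · simp [hE0 A n hn y hy]
    exact this hy
  have hsupp : ∀ y ∈ I, {n | e n y ≠ 0}.Finite := by
    intro y hy
    refine Submodule.iSup_induction p (motive := fun y => {n | e n y ≠ 0}.Finite) hy ?_ ?_ ?_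
    · intro m y hy
      refine (Set.finite_singleton m).subset ?_
      intro n hn
      by_contra hnm
      exact hn (he0 n m (fun h => hnm h.symm) y hy)
    · simp
    · intro a b ha hb
      refine (ha.union hb).subset ?_
      intro n hn
      by_contra hc
      simp only [Set.mem_union, not_or] at hc
      have h1 : e n a = 0 := by simpa using hc.1
      have h2 : e n b = 0 := by simpa using hc.2
      exact hn (by simp [h1, h2])
  let U : Finset ℕ → Set (ℕ × ℕ) := fun F => {n | n.1 ∈ F}
  let S1 : Submodule R P := ⨆ F : Finset ℕ, LinearMap.range (E (U F))
  let S2 : Submodule R P := ⨆ B : {B : Set (ℕ × ℕ) // ∀ F, (U F ∩ B).Finite}, LinearMap.range (E B)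
  have hS1 : ∀ x ∈ S1, ∃ F, E (U F) x = x := by
    intro x hx
    refine Submodule.iSup_induction _ (motive := fun x => ∃ F, E (U F) x = x) hx ?_ ?_ ?_
    · rintro F _ ⟨y, rfl⟩
      exact ⟨F, hEsub _ _ le_rfl y⟩
    · exact ⟨∅, map_zero _⟩
    · rintro a b ⟨F, hF⟩ ⟨F', hF'⟩
      refine ⟨F ∪ F', ?_⟩
      have h1 : U F ⊆ U (F ∪ F') := fun n hn => Finset.mem_union_left _ hn
      have h2 : U F' ⊆ U (F ∪ F') := fun n hn => Finset.mem_union_right _ hn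
      rw [map_add, ← hF, ← hF', hEsub _ _ h1, hEsub _ _ h2, hF, hF']
  have hS2 : ∀ y ∈ S2, ∀ F, E (U F) y ∈ I := by
    intro y hy F
    have : S2 ≤ I.comap (E (U F)) := by
      refine iSup_le fun B => ?_
      rintro _ ⟨z, rfl⟩
      simp only [Submodule.mem_comap, hEE]
      exact hEfin _ (B.2 F) _
    exact this hy
  have hS12 : ∀ x ∈ S1, ∀ y ∈ S2, x + y ∈ I → x ∈ I := by
    intro x hx y hy hxy
    obtain ⟨F, hF⟩ := hS1 x hx
    have h1 := hEI (U F) _ hxy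
    rw [map_add, hF] at h1
    simpa using I.sub_mem h1 (hS2 y hy F)
  let X1 := S1.map I.mkQ
  let X2 := S2.map I.mkQ
  let c : (X1 × X2) →ₗ[R] P ⧸ I := X1.subtype.coprod X2.subtype
  have hc : Function.Injective c := by
    rw [← LinearMap.ker_eq_bot, Submodule.eq_bot_iff]
    rintro ⟨⟨_, x, hx, rfl⟩, ⟨_, y, hy, rfl⟩⟩ hz
    have hz : I.mkQ x + I.mkQ y = 0 := hz
    rw [← map_add] at hz
    have hxy : x + y ∈ I := (Submodule.Quotient.mk_eq_zero I).1 hz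
    have hxI := hS12 x hx y hy hxy
    have hyI : y ∈ I := by simpa using I.sub_mem hxy hxI
    refine Prod.ext (Subtype.ext ?_) (Subtype.ext ?_)
    · simpa using hxI
    · simpa using hyI
  obtain ⟨h, hh⟩ := (hquot I).out c hc (X1.subtype ∘ₗ LinearMap.fst R X1 X2)
  obtain ⟨x, hx⟩ := Module.projective_lifting_property I.mkQ (h ∘ₗ I.mkQ) I.mkQ_surjective
  have hx' : ∀ y, I.mkQ (x y) = h (I.mkQ y) := fun y => LinearMap.congr_fun hx y
  have hx1 : ∀ s ∈ S1, x s - s ∈ I := by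
    intro s hs
    have h1 := hh (⟨I.mkQ s, s, hs, rfl⟩, 0)
    have h2 : h (I.mkQ s) = I.mkQ s := by simpa [c] using h1
    rw [← hx'] at h2
    rw [← Submodule.Quotient.mk_eq_zero, ← Submodule.mkQ_apply, map_sub, h2, sub_self]
  have hx2 : ∀ s ∈ S2, x s ∈ I := by
    intro s hs
    have h1 := hh (0, ⟨I.mkQ s, s, hs, rfl⟩)
    have h2 : h (I.mkQ s) = 0 := by simpa [c] using h1
    rw [← hx'] at h2
    rwa [← Submodule.Quotient.mk_eq_zero, ← Submodule.mkQ_apply]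
  have hN : ∀ i : ℕ, ∃ N : ℕ, ∀ y ∈ p (i, N), e (i, N) (x y) = y := by
    intro i
    have h1 : x (E (U {i}) w) - E (U {i}) w ∈ I :=
      hx1 _ (Submodule.mem_iSup_of_mem {i} ⟨w, rfl⟩)
    have h2 := hsupp _ h1
    have h3 : ((fun N : ℕ => ((i, N) : ℕ × ℕ)) ⁻¹' {n | e n (x (E (U {i}) w) - E (U {i}) w) ≠ 0}).Finite :=
      h2.preimage (fun a _ b _ h => (Prod.ext_iff.1 h).2)
    obtain ⟨N, hN⟩ := h3.exists_notMem
    have hN' : e (i, N) (x (E (U {i}) w) - E (U {i}) w) = 0 := by simpa using hN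
    refine ⟨N, fun y hy => ?_⟩
    have h4 : e (i, N) ∘ₗ (x - LinearMap.id) ∘ₗ E (U {i}) = 0 := hw _ (by simpa using hN')
    have h5 := LinearMap.congr_fun h4 y
    have h6 : E (U {i}) y = y := hE1 _ (i, N) (by simp [U]) y hy
    simp [h6, he1 _ y hy] at h5
    exact sub_eq_zero.1 h5
  choose N hN using hN
  let B : Set (ℕ × ℕ) := Set.range fun i => (i, N i)
  have hB : ∀ F, (U F ∩ B).Finite := by
    intro F
    refine (F.image fun i => (i, N i)).finite_toSet.subset ?_
    rintro _ ⟨h1, i, rfl⟩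
    have h1 : i ∈ F := h1
    simp [h1]
  have hBI : x (E B w) ∈ I := by
    have hm : E B w ∈ S2 := by
      have hle : LinearMap.range (E B) ≤ S2 :=
        le_iSup (fun B : {B : Set (ℕ × ℕ) // ∀ F, (U F ∩ B).Finite} => LinearMap.range (E B))
          ⟨B, hB⟩
      exact hle (LinearMap.mem_range_self (E B) w)
    exact hx2 _ hm
  have h3 : ((fun i : ℕ => ((i, N i) : ℕ × ℕ)) ⁻¹' {n | e n (x (E B w)) ≠ 0}).Finite :=
    (hsupp _ hBI).preimage (fun a _ b _ h => (Prod.ext_iff.1 h).1)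
  obtain ⟨i, hi⟩ := h3.exists_notMem
  have hi' : e (i, N i) (x (E B w)) = 0 := by simpa using hi
  have h4 : e (i, N i) ∘ₗ x ∘ₗ E B = 0 := hw _ (by simpa using hi')
  apply hne (i, N i)
  rw [Submodule.eq_bot_iff]
  intro y hy
  have h5 := LinearMap.congr_fun h4 y
  have h6 : E B y = y := hE1 _ (i, N i) (Set.mem_range_self i) y hy
  simpa [h6, hN i y hy] using h5

theorem inj_sup (S T : Submodule R P) (h : S ⊓ T = ⊥) (hS : Module.Injective R S)
    (hT : Module.Injective R T) : Module.Injective R ↥(S ⊔ T) := by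
  let c : (S × T) →ₗ[R] P := S.subtype.coprod T.subtype
  have hc : Function.Injective c := by
    apply LinearMap.ker_eq_bot.1
    rw [LinearMap.ker_coprod_of_disjoint_range]
    · simp
    · simpa [disjoint_iff] using h
  have hr : LinearMap.range c = S ⊔ T := by simp [c, LinearMap.range_coprod]
  rw [← hr]
  exact inj_equiv (inj_prod hS hT) (LinearEquiv.ofInjective c hc)

theorem inj_sSup (s : Set (Submodule R P)) (hs : s.Finite) (hind : sSupIndep s)
    (hinj : ∀ S ∈ s, Module.Injective R S) : Module.Injective R ↥(sSup s) := by
  induction s, hs using Set.Finite.induction_on with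
  | empty =>
    rw [sSup_empty]
    refine ⟨fun X Y _ _ _ _ f hf g => ⟨0, fun x => Subsingleton.elim _ _⟩⟩
  | @insert a s ha hs ih =>
    rw [sSup_insert]
    apply inj_sup
    · have := hind (Set.mem_insert a s)
      rw [Set.insert_sdiff_self_of_notMem ha] at this
      exact disjoint_iff.1 this
    · exact hinj a (Set.mem_insert _ _)
    · exact ih (hind.mono (Set.subset_insert _ _)) fun S hS => hinj S (Set.mem_insert_of_mem _ hS)

theorem osofsky_semisimple (hproj : Module.Projective R P) (w : P)
    (hw : ∀ f : P →ₗ[R] P, f w = 0 → f = 0)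
    (hquot : ∀ N : Submodule R P, Module.Injective R (P ⧸ N))
    (hsub : ∀ N : Submodule R P, N ≠ ⊥ → ∃ S ≤ N, S ≠ ⊥ ∧ Module.Injective R S) :
    IsSemisimpleModule R P := by
  rw [isSemisimpleModule_iff]
  refine ⟨fun N => ?_⟩
  obtain ⟨s, hs⟩ := zorn_subset
    {s : Set (Submodule R P) | sSupIndep s ∧ ∀ S ∈ s, S ≤ N ∧ S ≠ ⊥ ∧ Module.Injective R S} (by
    intro c hc hchain
    refine ⟨⋃₀ c, ⟨?_, ?_⟩, fun z hz => Set.subset_sUnion_of_mem hz⟩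
    · exact iSupIndep_sUnion_of_directed hchain.directedOn fun a ha => (hc ha).1
    · rintro S ⟨t, ht, hS⟩
      exact (hc ht).2 S hS)
  obtain ⟨⟨hind, hprop⟩, hmax⟩ := hs
  have hfin : s.Finite := by
    by_contra hinf
    have hinf : s.Infinite := hinf
    let em := hinf.natEmbedding
    let p : ℕ × ℕ → Submodule R P := fun n => (em (Nat.pairEquiv n) : Submodule R P)
    refine osofsky_core hproj w hw hquot hsub p ?_ (fun n => (hprop _ (em _).2).2.1)
      (fun n => (hprop _ (em _).2).2.2)
    have h1 : iSupIndep ((↑) : s → Submodule R P) := (sSupIndep_iff s).1 hind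
    exact h1.comp (f := fun n => em (Nat.pairEquiv n)) (em.injective.comp Nat.pairEquiv.injective)
  have hSinj := inj_sSup s hfin hind fun S hS => (hprop S hS).2.2
  have hSN : sSup s ≤ N := sSup_le fun S hS => (hprop S hS).1
  obtain ⟨r, hr⟩ := inj_split hSinj (sSup s).subtype (sSup s).injective_subtype
  have hr' : ∀ y ∈ sSup s, (r y : P) = y := fun y hy => congrArg Subtype.val (hr ⟨y, hy⟩)
  have hbot : N ⊓ LinearMap.ker r = ⊥ := by
    by_contra hne
    obtain ⟨T, hT, hT0, hTi⟩ := hsub _ hne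
    have hdis : Disjoint T (sSup s) := by
      rw [disjoint_iff, Submodule.eq_bot_iff]
      rintro y ⟨h1, h2⟩
      have h3 : r y = 0 := (hT h1).2
      rw [← hr' y h2, h3]; rfl
    have hTs : T ∉ s := by
      intro h
      exact hT0 (disjoint_self.1 (hdis.mono_right (le_sSup h)))
    have hins : sSupIndep (insert T s) := by
      intro a ha
      rcases Set.mem_insert_iff.1 ha with rfl | ha'
      · rw [Set.insert_sdiff_self_of_notMem hTs]; exact hdis
      · have hne : a ≠ T := fun h => hTs (h ▸ ha')
        have h1 : insert T s \ {a} = insert T (s \ {a}) := by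
          rw [Set.insert_sdiff_of_notMem]
          simpa using hne.symm
        rw [h1, sSup_insert]
        have h2 : Disjoint a (sSup (s \ {a})) := hind ha'
        have h3 : a ⊔ sSup (s \ {a}) ≤ sSup s :=
          sup_le (le_sSup ha') (sSup_le_sSup Set.sdiff_subset)
        rw [sup_comm]
        exact Disjoint.disjoint_sup_right_of_disjoint_sup_left h2 (hdis.symm.mono_left h3)
    have := hmax (y := insert T s) ⟨hins, by
      intro S hS
      rcases Set.mem_insert_iff.1 hS with rfl | hS
      · exact ⟨hT.trans inf_le_left, hT0, hTi⟩
      · exact hprop S hS⟩ (Set.subset_insert _ _)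
    exact hTs (this (Set.mem_insert _ _))
  refine ⟨LinearMap.ker r, disjoint_iff.2 hbot, ?_⟩
  rw [codisjoint_iff, eq_top_iff]
  intro y _
  rw [Submodule.mem_sup]
  refine ⟨r y, hSN (r y).2, y - r y, ?_, by abel⟩
  have := hr (r y)
  simp only [Submodule.subtype_apply] at this
  simp [this]

end osofsky
end CAI

namespace CAI

section split
variable {R : Type u} [Ring R]

theorem square_decomp_maps {M G : Type u} [AddCommGroup M] [Module R M] [AddCommGroup G]
    [Module R G] (hM : AutInvariant R M) (f1 f2 : G →ₗ[R] M) (h1 : Function.Injective f1)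
    (h2 : Function.Injective f2) (hd : ∀ g h, f1 g = f2 h → g = 0) :
    ∃ p q : M →ₗ[R] M, (∀ x, p (p x) = 0) ∧ (∀ x, q (q x) = 0) ∧ (∀ x, p (q (p x)) = p x) ∧
      (∀ x, q (p (q x)) = q x) ∧ (∀ g, q (f1 g) = f2 g) ∧ (∀ g, p (f2 g) = f1 g) := by
  obtain ⟨p, q, a1, a2, a3, a4, a5, a6⟩ := square_decomp hM (LinearMap.range f1)
    (LinearMap.range f2) (by
      rw [Submodule.eq_bot_iff]
      rintro _ ⟨⟨g, rfl⟩, ⟨h, hh⟩⟩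
      rw [hd g h hh.symm, map_zero])
    ((LinearEquiv.ofInjective f1 h1).symm ≪≫ₗ (LinearEquiv.ofInjective f2 h2))
  have key : ∀ g, ((LinearEquiv.ofInjective f1 h1).symm ≪≫ₗ (LinearEquiv.ofInjective f2 h2))
      ((LinearEquiv.ofInjective f1 h1) g) = (LinearEquiv.ofInjective f2 h2) g := by
    intro g; simp
  refine ⟨p, q, a1, a2, a3, a4, fun g => ?_, fun g => ?_⟩
  · have := a5 (LinearEquiv.ofInjective f1 h1 g)
    rw [key] at this
    simpa using this
  · have := a6 (LinearEquiv.ofInjective f1 h1 g)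
    rw [key] at this
    simpa using this

/-- Maximal square decomposition. -/
theorem exists_split {M : Type u} [AddCommGroup M] [Module R M] (hM : AutInvariant R M) :
    ∃ p q : M →ₗ[R] M, (∀ x, p (p x) = 0) ∧ (∀ x, q (q x) = 0) ∧ (∀ x, p (q (p x)) = p x) ∧
      (∀ x, q (p (q x)) = q x) ∧
      (∀ (L : Type u) [AddCommGroup L] [Module R L] (f1 f2 : L →ₗ[R] M),
        Function.Injective f1 → Function.Injective f2 → (∀ g h, f1 g = f2 h → g = 0) →
        (∀ g, p (f1 g) = 0 ∧ q (f1 g) = 0) → (∀ g, p (f2 g) = 0 ∧ q (f2 g) = 0) →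
        ∀ g : L, g = 0) := by
  let 𝒢 : Set (Submodule R (M × M)) :=
    {G | ∀ g ∈ G, ∀ h ∈ G, g.1 = h.2 → g = 0 ∧ h = 0}
  obtain ⟨G, -, hG⟩ := zorn_le_nonempty₀ 𝒢 (by
    intro c hc hchain y hy
    refine ⟨sSup c, ?_, fun z hz => le_sSup hz⟩
    intro g hg h hh hgh
    rw [Submodule.mem_sSup_of_directed ⟨y, hy⟩ hchain.directedOn] at hg hh
    obtain ⟨s, hs, hg⟩ := hg
    obtain ⟨t, ht, hh⟩ := hh
    rcases hchain.total hs ht with h1 | h1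
    · exact hc ht g (h1 hg) h hh hgh
    · exact hc hs g hg h (h1 hh) hgh) ⊥ (by
    intro g hg h hh _
    exact ⟨by simpa using hg, by simpa using hh⟩)
  have hGp : ∀ g ∈ G, ∀ h ∈ G, g.1 = h.2 → g = 0 ∧ h = 0 := hG.prop
  obtain ⟨p, q, a1, a2, a3, a4, a5, a6⟩ := square_decomp_maps hM
    (LinearMap.fst R M M ∘ₗ G.subtype) (LinearMap.snd R M M ∘ₗ G.subtype)
    (by
      rw [← LinearMap.ker_eq_bot, Submodule.eq_bot_iff]
      intro g hg
      have hg : (g : M × M).1 = 0 := hg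
      exact Subtype.ext (hGp g g.2 0 G.zero_mem (by simpa using hg)).1)
    (by
      rw [← LinearMap.ker_eq_bot, Submodule.eq_bot_iff]
      intro g hg
      have hg : (g : M × M).2 = 0 := hg
      exact Subtype.ext (hGp 0 G.zero_mem g g.2 (by simpa using hg.symm)).2)
    (fun g h hgh => Subtype.ext (hGp g g.2 h h.2 hgh).1)
  refine ⟨p, q, a1, a2, a3, a4, ?_⟩
  intro L _ _ f1 f2 h1 h2 hd hf1 hf2 l
  let G1 : Submodule R (M × M) :=
    { carrier := {g | g.2 = q g.1 ∧ g.1 = p g.2}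
      add_mem' := by
        rintro a b ⟨ha, ha'⟩ ⟨hb, hb'⟩
        refine ⟨?_, ?_⟩
        · simp [ha.symm, hb.symm]
        · simp [ha'.symm, hb'.symm]
      zero_mem' := by simp
      smul_mem' := by
        rintro c a ⟨ha, ha'⟩
        refine ⟨?_, ?_⟩
        · simp [ha.symm]
        · simp [ha'.symm] }
  have hG1 : G ≤ G1 := fun g hg => ⟨(a5 ⟨g, hg⟩).symm, (a6 ⟨g, hg⟩).symm⟩
  let G2 : Submodule R (M × M) := G1 ⊔ LinearMap.range (f1.prod f2)
  have hG2 : G2 ∈ 𝒢 := by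
    intro x hx y hy hxy
    obtain ⟨g, ⟨hg, hg'⟩, _, ⟨a, rfl⟩, rfl⟩ := Submodule.mem_sup.1 hx
    obtain ⟨h, ⟨hh, hh'⟩, _, ⟨b, rfl⟩, rfl⟩ := Submodule.mem_sup.1 hy
    have hxy : g.1 + f1 a = h.2 + f2 b := hxy
    have e1 := congrArg p hxy
    have e2 := congrArg q hxy
    rw [map_add, map_add, (hf1 a).1, (hf2 b).1, ← hh', hg', a1] at e1
    rw [map_add, map_add, (hf1 a).2, (hf2 b).2, ← hg, hh, a2] at e2
    simp only [add_zero] at e1 e2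
    have g1 : g.1 = 0 := by rw [hg', e2, map_zero]
    have h1' : h.2 = 0 := by rw [hh, ← e1, map_zero]
    rw [g1, h1', zero_add, zero_add] at hxy
    have ha := hd a b hxy
    have hb : b = 0 := h2 (by rw [← hxy, ha, map_zero, map_zero])
    subst ha hb
    refine ⟨?_, ?_⟩
    · exact Prod.ext (by simp [g1]) (by simp [e2])
    · exact Prod.ext (by simp [← e1]) (by simp [h1'])
  have hle : G2 ≤ G := hG.le_of_ge hG2 (hG1.trans le_sup_left)
  have hl : (f1 l, f2 l) ∈ G1 := hG1 (hle (Submodule.mem_sup_right ⟨l, rfl⟩))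
  have hl2 : f1 l = p (f2 l) := hl.2
  rw [(hf2 l).1] at hl2
  exact h1 (by rw [hl2, map_zero])

variable (cyc : ∀ (M : Type u) [AddCommGroup M] [Module R M] (s : R →ₗ[R] M),
  Function.Surjective s → AutInvariant R M)

section
variable (p q : R →ₗ[R] R) (a1 : ∀ x, p (p x) = 0) (a2 : ∀ x, q (q x) = 0)
  (a3 : ∀ x, p (q (p x)) = p x) (a4 : ∀ x, q (p (q x)) = q x)

include cyc a3

theorem relA {Q : Type u} [AddCommGroup Q] [Module R Q] (α : R →ₗ[R] Q)
    (hα : ∀ y, ∃ x, p x = 0 ∧ α x = y) : RelInjective R Q (LinearMap.range p) := by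
  apply relInj_of_prod
  refine cyc _ (α.prod p.rangeRestrict) ?_
  rintro ⟨y, ⟨_, b, rfl⟩⟩
  obtain ⟨x, hx, hx'⟩ := hα (y - α (q (p b)))
  refine ⟨x + q (p b), Prod.ext ?_ (Subtype.ext ?_)⟩
  · simp [hx']
  · simp [hx, a3]

include a1 a2 in
theorem quotA {Q : Type u} [AddCommGroup Q] [Module R Q] (t : LinearMap.range p →ₗ[R] Q)
    (ht : Function.Surjective t) : Module.Injective R Q := by
  apply inj_of_relInj
  have he : LinearMap.range (p ∘ₗ q) = LinearMap.range p := by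
    apply le_antisymm
    · rintro _ ⟨x, rfl⟩; exact ⟨q x, rfl⟩
    · rintro _ ⟨x, rfl⟩; exact ⟨p x, a3 x⟩
  refine relInj_sum (p ∘ₗ q) (fun x => by simp [a3]) ?_ ?_
  · rw [he]
    refine relA cyc p q a3 (t ∘ₗ p.rangeRestrict ∘ₗ q) ?_
    intro y
    obtain ⟨⟨_, x, rfl⟩, rfl⟩ := ht y
    refine ⟨p x, a1 x, ?_⟩
    simp only [LinearMap.comp_apply]
    congr 1
    exact Subtype.ext (a3 x)
  · apply relInj_of_prod
    refine cyc _ ((t ∘ₗ p.rangeRestrict ∘ₗ q).prod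
      ((LinearMap.id - p ∘ₗ q).codRestrict _ (fun x => by simp [a3]))) ?_
    rintro ⟨y, ⟨k, hk⟩⟩
    obtain ⟨⟨_, x, rfl⟩, rfl⟩ := ht y
    have hk : p (q k) = 0 := hk
    refine ⟨p x + k, Prod.ext ?_ (Subtype.ext ?_)⟩
    · have h1 : (p.rangeRestrict ∘ₗ q) (p x + k) = ⟨p x, x, rfl⟩ :=
        Subtype.ext (by simp [a3, hk])
      exact congrArg t h1
    · simp [a3, hk]

include a1 a2 a4 in
theorem semisimpleA : IsSemisimpleModule R (LinearMap.range p) := by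
  have hproj : Module.Projective R (LinearMap.range p) :=
    Module.Projective.of_split (LinearMap.range p).subtype (p.rangeRestrict ∘ₗ q) (by
      ext ⟨_, x, rfl⟩
      simp [a3])
  refine osofsky_semisimple hproj (p.rangeRestrict 1) ?_ (fun N => quotA cyc p q a1 a2 a3 N.mkQ
    N.mkQ_surjective) ?_
  · intro f hf
    ext ⟨_, x, rfl⟩
    have : (⟨p x, x, rfl⟩ : LinearMap.range p) = x • p.rangeRestrict 1 := by
      rw [← map_smul]; simp; rfl
    rw [this, map_smul, hf]
    simp
  · intro N hN
    obtain ⟨a, ha, ha0⟩ := Submodule.exists_mem_ne_zero_of_ne_bot hN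
    let ρ : R →ₗ[R] LinearMap.range p := LinearMap.toSpanSingleton R _ a
    have hρ : ∀ x, ρ x ∈ N := fun x => N.smul_mem x ha
    have key : ∀ β : R →ₗ[R] R, (∀ x0, ∃ x, p x = 0 ∧ β x = β x0) →
        Module.Injective R (LinearMap.range (ρ ∘ₗ β)) := by
      intro β hβ
      have h1 : RelInjective R (LinearMap.range (ρ ∘ₗ β)) (LinearMap.range p) := by
        refine relA cyc p q a3 (ρ ∘ₗ β).rangeRestrict ?_
        rintro ⟨_, x0, rfl⟩
        obtain ⟨x, hx, hx'⟩ := hβ x0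
        exact ⟨x, hx, Subtype.ext (by simp [hx'])⟩
      obtain ⟨g, hg⟩ := h1 (LinearMap.range (ρ ∘ₗ β)) LinearMap.id
      exact quotA cyc p q a1 a2 a3 g (fun y => ⟨y, hg y⟩)
    by_contra hcon
    push Not at hcon
    have key2 : ∀ β : R →ₗ[R] R, (∀ x0, ∃ x, p x = 0 ∧ β x = β x0) → ∀ x, ρ (β x) = 0 := by
      intro β hβ x
      by_contra hne
      refine hcon (LinearMap.range (ρ ∘ₗ β)) ?_ ?_ (key β hβ)
      · rintro _ ⟨y, rfl⟩; exact hρ _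
      · intro h
        exact hne ((Submodule.eq_bot_iff _).1 h _ ⟨x, rfl⟩)
    let c : R →ₗ[R] R := LinearMap.id - p ∘ₗ q - q ∘ₗ p
    have hc : ∀ x, c x = x - p (q x) - q (p x) := fun x => rfl
    have k1 := key2 (p ∘ₗ q) (fun x0 => ⟨p (q x0), a1 _, by simp [a3]⟩) 1
    have k2 := key2 q (fun x0 => ⟨p (q x0), a1 _, a4 _⟩) (p 1)
    have k3 := key2 c (fun x0 => ⟨c x0, by simp [hc, a1, a3], by simp [hc, a1, a2, a3, a4]⟩) 1
    apply ha0
    have : ρ 1 = a := by simp [ρ]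
    rw [← this]
    have e : (1 : R) = (p ∘ₗ q) 1 + q (p 1) + c 1 := by
      simp [hc]
    rw [e, map_add, map_add, k1, k2, k3]
    simp

end

end split
end CAI

namespace CAI

section splitmain
variable {R : Type u} [Ring R]

theorem split_main (cyc : ∀ (M : Type u) [AddCommGroup M] [Module R M] (s : R →ₗ[R] M),
    Function.Surjective s → AutInvariant R M) :
    ∃ π : R →ₗ[R] R, (∀ x, π (π x) = π x) ∧ IsSemisimpleModule R (LinearMap.ker π) ∧
      (∀ f : LinearMap.ker π →ₗ[R] LinearMap.range π, f = 0) ∧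
      (∀ f : LinearMap.range π →ₗ[R] LinearMap.ker π, f = 0) ∧
      SquareFreeMod R (LinearMap.range π) := by
  obtain ⟨p, q, a1, a2, a3, a4, sf⟩ := exists_split (cyc R LinearMap.id Function.surjective_id)
  have hA := semisimpleA cyc p q a1 a2 a3 a4
  have hfin : Module.Finite R (LinearMap.range p) :=
    Module.Finite.of_surjective p.rangeRestrict p.surjective_rangeRestrict
  have hart : IsArtinian R (LinearMap.range p) :=
    ((IsSemisimpleModule.finite_tfae (R := R) (M := LinearMap.range p)).out 0 2).1 hfin
  let A := LinearMap.range p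
  let c : R →ₗ[R] R := LinearMap.id - p ∘ₗ q - q ∘ₗ p
  have hc : ∀ x, c x = x - p (q x) - q (p x) := fun x => rfl
  -- choose a homomorphism with minimal kernel
  obtain ⟨_, ⟨h, hC, rfl⟩, hmin⟩ := IsArtinian.set_has_minimal
    {K : Submodule R A | ∃ h : A →ₗ[R] R, (∀ a, p (h a) = 0 ∧ q (h a) = 0) ∧ LinearMap.ker h = K}
    ⟨_, 0, by simp, rfl⟩
  have hDinj : Module.Injective R (LinearMap.range h) :=
    quotA cyc p q a1 a2 a3 h.rangeRestrict h.surjective_rangeRestrict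
  obtain ⟨r0, hr0⟩ := inj_split hDinj (LinearMap.range h).subtype (Submodule.injective_subtype _)
  let r : R →ₗ[R] R := (LinearMap.range h).subtype ∘ₗ r0
  have hrh : ∀ a, r (h a) = h a := fun a => congrArg Subtype.val (hr0 ⟨h a, a, rfl⟩)
  have hrr : ∀ x, ∃ a, r x = h a := by
    intro x
    obtain ⟨a, ha⟩ := (r0 x).2
    exact ⟨a, ha.symm⟩
  have hpr : ∀ x, p (r x) = 0 ∧ q (r x) = 0 := by
    intro x
    obtain ⟨a, ha⟩ := hrr x
    rw [ha]; exact hC a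
  have hrr' : ∀ x, r (r x) = r x := by
    intro x
    obtain ⟨a, ha⟩ := hrr x
    rw [ha, hrh]
  -- homomorphisms from `A` into the complement vanish
  have hzero : ∀ f : A →ₗ[R] R, (∀ a, p (f a) = 0 ∧ q (f a) = 0) → (∀ a, r (f a) = 0) →
      f = 0 := by
    intro f hf hrf
    have hker : LinearMap.ker h ≤ LinearMap.ker f := by
      obtain ⟨K', hK'⟩ := exists_isCompl (LinearMap.ker h)
      let e : A →ₗ[R] A := (LinearMap.ker h).subtype ∘ₗ (LinearMap.ker h).projectionOnto K' hK'
      have he : ∀ a ∈ LinearMap.ker h, e a = a := by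
        intro a ha
        exact congrArg Subtype.val (Submodule.projectionOnto_apply_left hK' ⟨a, ha⟩)
      have hle : LinearMap.ker (h + f ∘ₗ e) ≤ LinearMap.ker h ⊓ LinearMap.ker f := by
        intro a ha
        have ha : h a + f (e a) = 0 := ha
        have h1 := congrArg r ha
        rw [map_add, hrh, hrf, add_zero, map_zero] at h1
        rw [h1, zero_add, he a h1] at ha
        exact ⟨h1, ha⟩
      have hnot := hmin (LinearMap.ker (h + f ∘ₗ e)) ⟨h + f ∘ₗ e, fun a => by
        simp [(hC a).1, (hC a).2, (hf (e a)).1, (hf (e a)).2], rfl⟩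
      by_contra hcon
      apply hnot
      refine lt_of_le_of_ne (hle.trans inf_le_left) ?_
      intro heq
      apply hcon
      rw [← heq]
      exact hle.trans inf_le_right
    obtain ⟨L, hL⟩ := exists_isCompl (LinearMap.ker f)
    have hLf : ∀ l ∈ L, f l = 0 → l = 0 := by
      intro l hl h0
      have : l ∈ LinearMap.ker f ⊓ L := ⟨h0, hl⟩
      rwa [hL.inf_eq_bot] at this
    have hL0 := sf L (h ∘ₗ L.subtype) (f ∘ₗ L.subtype)
      (by
        rw [← LinearMap.ker_eq_bot, Submodule.eq_bot_iff]
        intro l hl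
        exact Subtype.ext (hLf l l.2 (hker hl)))
      (by
        rw [← LinearMap.ker_eq_bot, Submodule.eq_bot_iff]
        intro l hl
        exact Subtype.ext (hLf l l.2 hl))
      (by
        intro g k hgk
        have hgk : h g = f k := hgk
        have h1 := congrArg r hgk
        rw [hrh, hrf] at h1
        exact Subtype.ext (hLf g g.2 (hker h1)))
      (fun g => hC _) (fun g => hf _)
    have hLb : L = ⊥ := by
      rw [Submodule.eq_bot_iff]
      intro l hl
      exact congrArg Subtype.val (hL0 ⟨l, hl⟩)
    have := hL.sup_eq_top
    rw [hLb, sup_bot_eq] at this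
    exact LinearMap.ker_eq_top.1 this
  let π : R →ₗ[R] R := c - r ∘ₗ c
  have hπ : ∀ x, π x = c x - r (c x) := fun x => rfl
  have hcfix : ∀ x, p x = 0 → q x = 0 → c x = x := by
    intro x h1 h2
    simp [hc, h1, h2]
  have hpc : ∀ x, p (c x) = 0 := fun x => by simp [hc, a1, a3]
  have hqc : ∀ x, q (c x) = 0 := fun x => by simp [hc, a2, a4]
  have hpπ : ∀ x, p (π x) = 0 ∧ q (π x) = 0 := fun x => by
    simp [hπ, hpc, hqc, (hpr (c x)).1, (hpr (c x)).2]
  have hrπ : ∀ x, r (π x) = 0 := fun x => by simp [hπ, hrr']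
  have hππ : ∀ x, π (π x) = π x := by
    intro x
    rw [hπ (π x), hcfix _ (hpπ x).1 (hpπ x).2, hrπ, sub_zero]
  have hker : ∀ x, π x = 0 → ∃ a b d : A, x = a + q b + h d := by
    intro x hx
    obtain ⟨d, hd⟩ := hrr (c x)
    refine ⟨⟨p (q x), _, rfl⟩, ⟨p x, _, rfl⟩, d, ?_⟩
    have hx : c x - r (c x) = 0 := hx
    rw [← hd, ← sub_eq_zero.1 hx]
    simp [hc]
  have hkA : ∀ a : A, π a = 0 := by
    rintro ⟨_, a, rfl⟩
    simp [hπ, hc, a1, a3]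
  have hkq : ∀ a, π (q a) = 0 := by
    intro a
    simp [hπ, hc, a2, a4]
  have hkh : ∀ a, π (h a) = 0 := by
    intro a
    rw [hπ, hcfix _ (hC a).1 (hC a).2, hrh, sub_self]
  have hss : IsSemisimpleModule R (LinearMap.ker π) := by
    have hA2 : IsSemisimpleModule R A := hA
    let m : (Fin 3 → A) →ₗ[R] LinearMap.ker π := LinearMap.codRestrict (LinearMap.ker π)
      (A.subtype ∘ₗ LinearMap.proj 0 + q ∘ₗ A.subtype ∘ₗ LinearMap.proj 1
        + h ∘ₗ LinearMap.proj 2) (by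
        intro a
        simp [hkA, hkq, hkh])
    have hm : Function.Surjective m := by
      rintro ⟨x, hx⟩
      obtain ⟨a, b, d, habd⟩ := hker x hx
      exact ⟨![a, b, d], Subtype.ext habd.symm⟩
    exact IsSemisimpleModule.of_surjective m hm
  have hXY : ∀ f : LinearMap.ker π →ₗ[R] LinearMap.range π, f = 0 := by
    intro f
    have hz : ∀ g : A →ₗ[R] LinearMap.ker π, ∀ a, f (g a) = 0 := by
      intro g a
      have h0 := hzero ((LinearMap.range π).subtype ∘ₗ f ∘ₗ g) (fun a => by
        obtain ⟨y, hy⟩ := (f (g a)).2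
        have := hpπ y
        rw [hy] at this
        exact this) (fun a => by
        obtain ⟨y, hy⟩ := (f (g a)).2
        have := hrπ y
        rw [hy] at this
        exact this)
      exact Subtype.ext (LinearMap.congr_fun h0 a)
    refine LinearMap.ext ?_
    rintro ⟨x, hx⟩
    obtain ⟨a, b, d, habd⟩ := hker x hx
    have h1 := hz (A.subtype.codRestrict _ hkA) a
    have h2 := hz ((q ∘ₗ A.subtype).codRestrict _ (fun a => hkq a)) b
    have h3 := hz (h.codRestrict _ hkh) d
    have e : (⟨x, hx⟩ : LinearMap.ker π) = A.subtype.codRestrict _ hkA a +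
      (q ∘ₗ A.subtype).codRestrict _ (fun a => hkq a) b + h.codRestrict _ hkh d :=
      Subtype.ext habd
    rw [e, map_add, map_add, h1, h2, h3]
    simp
  refine ⟨π, hππ, hss, hXY, ?_, ?_⟩
  · intro f
    let F : R →ₗ[R] LinearMap.ker π := f ∘ₗ π.rangeRestrict
    have hprX : Module.Projective R (LinearMap.ker π) :=
      Module.Projective.of_split (LinearMap.ker π).subtype
        ((LinearMap.id - π).codRestrict _ (fun x => by simp [hππ])) (by
          ext ⟨x, hx⟩
          have hx : π x = 0 := hx
          simp [hx])
    obtain ⟨K, hK⟩ := exists_isCompl (LinearMap.range F)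
    let e := (LinearMap.range F).projectionOnto K hK
    have he : ∀ z : LinearMap.range F, e (z : LinearMap.ker π) = z := fun z => Submodule.projectionOnto_apply_left hK z
    have hprF : Module.Projective R (LinearMap.range F) :=
      Module.Projective.of_split (LinearMap.range F).subtype e (LinearMap.ext he)
    obtain ⟨g, hg⟩ := Module.projective_lifting_property F.rangeRestrict LinearMap.id
      F.surjective_rangeRestrict
    have h0 := hXY (π.rangeRestrict ∘ₗ g ∘ₗ e)
    have h1 : ∀ z : LinearMap.range F, (z : LinearMap.ker π) = 0 := by
      intro z
      have h2 := LinearMap.congr_fun h0 (z : LinearMap.ker π)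
      have h3 : F (g z) = z := congrArg Subtype.val (LinearMap.congr_fun hg z)
      have h4 : π.rangeRestrict (g z) = 0 := by
        have h5 : π.rangeRestrict (g (e (z : LinearMap.ker π))) = 0 := h2
        rwa [he z] at h5
      rw [← h3]
      change f (π.rangeRestrict (g z)) = 0
      rw [h4, map_zero]
    refine LinearMap.ext ?_
    rintro ⟨_, x, rfl⟩
    exact h1 ⟨F x, x, rfl⟩
  · rintro U V hUV ⟨φ⟩
    have := sf U ((LinearMap.range π).subtype ∘ₗ U.subtype)
      ((LinearMap.range π).subtype ∘ₗ V.subtype ∘ₗ φ.toLinearMap)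
      (fun a b hab => Subtype.ext (Subtype.ext hab))
      (fun a b hab => φ.injective (Subtype.ext (Subtype.ext hab)))
      (by
        intro a b hab
        have hab : (a : LinearMap.range π) = φ b := Subtype.ext hab
        have : (a : LinearMap.range π) ∈ U ⊓ V := ⟨a.2, hab ▸ (φ b).2⟩
        rw [hUV] at this
        exact Subtype.ext this)
      (fun a => by
        obtain ⟨y, hy⟩ := (a : LinearMap.range π).2
        have := hpπ y
        rw [hy] at this
        exact this)
      (fun a => by
        obtain ⟨y, hy⟩ := (φ a : LinearMap.range π).2
        have := hpπ y
        rw [hy] at this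
        exact this)
    rw [Submodule.eq_bot_iff]
    intro x hx
    exact congrArg Subtype.val (this ⟨x, hx⟩)

end splitmain
end CAI

namespace CAI

section sqfree
variable {R : Type u} [Ring R] {N : Type u} [AddCommGroup N] [Module R N]

theorem sf_maps (sf : SquareFreeMod R N) {L : Type u} [AddCommGroup L] [Module R L]
    (f1 f2 : L →ₗ[R] N) (h1 : Function.Injective f1) (h2 : Function.Injective f2)
    (hd : ∀ g h, f1 g = f2 h → g = 0) (g : L) : g = 0 := by
  have := sf (LinearMap.range f1) (LinearMap.range f2) (by
      rw [Submodule.eq_bot_iff]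
      rintro _ ⟨⟨g, rfl⟩, ⟨h, hh⟩⟩
      rw [hd g h hh.symm, map_zero])
    ⟨(LinearEquiv.ofInjective f1 h1).symm ≪≫ₗ (LinearEquiv.ofInjective f2 h2)⟩
  rw [Submodule.eq_bot_iff] at this
  exact h1 (by rw [this _ ⟨g, rfl⟩, map_zero])

theorem sf_sub (sf : SquareFreeMod R N) (L : Submodule R N) (f1 f2 : N →ₗ[R] N)
    (h1 : ∀ x ∈ L, f1 x = 0 → x = 0) (h2 : ∀ x ∈ L, f2 x = 0 → x = 0)
    (hd : ∀ g ∈ L, ∀ h ∈ L, f1 g = f2 h → g = 0) : L = ⊥ := by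
  rw [Submodule.eq_bot_iff]
  intro x hx
  have := sf_maps sf (f1 ∘ₗ L.subtype) (f2 ∘ₗ L.subtype)
    (by
      rw [← LinearMap.ker_eq_bot, Submodule.eq_bot_iff]
      intro l hl
      exact Subtype.ext (h1 l l.2 hl))
    (by
      rw [← LinearMap.ker_eq_bot, Submodule.eq_bot_iff]
      intro l hl
      exact Subtype.ext (h2 l l.2 hl))
    (fun g h hgh => Subtype.ext (hd g g.2 h h.2 hgh)) ⟨x, hx⟩
  exact congrArg Subtype.val this

theorem idem_mod (hN : AutInvariant R N) (sf : SquareFreeMod R N) (t : N →ₗ[R] N) :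
    ∃ (u : N ≃ₗ[R] N) (p : N →ₗ[R] N), (∀ x, t x = u (p x)) ∧
      EssentialSub (LinearMap.ker (p ∘ₗ p - p)) := by
  obtain ⟨L, hL1, hL2, -⟩ := exists_compl (LinearMap.ker t)
  let K := LinearMap.ker t
  have hLt : ∀ l ∈ L, t l = 0 → l = 0 := by
    intro l hl h0
    have : l ∈ LinearMap.ker t ⊓ L := ⟨h0, hl⟩
    rwa [hL1] at this
  have hdis : ∀ l ∈ L, t (t l) = 0 → l = 0 := by
    intro l hl h0
    have hb : L ⊓ LinearMap.ker (t ∘ₗ t) = ⊥ := by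
      refine sf_sub sf _ LinearMap.id t (fun x _ h => h) (fun x hx h => hLt x hx.1 h) ?_
      intro g hg h hh hgh
      have hgh : g = t h := hgh
      apply hLt g hg.1
      rw [hgh]
      exact hh.2
    have : l ∈ L ⊓ LinearMap.ker (t ∘ₗ t) := ⟨hl, h0⟩
    rwa [hb] at this
  have hess : EssentialSub (K ⊔ L.map t) := by
    intro W hW
    apply hL2
    have hWK : ∀ x ∈ W, t x = 0 → x = 0 := by
      intro x hx h0
      have : x ∈ W ⊓ (K ⊔ L.map t) := ⟨hx, Submodule.mem_sup_left h0⟩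
      rwa [hW] at this
    refine sf_sub sf _ LinearMap.id t (fun x _ h => h) (fun x hx h => hWK x hx.1 h) ?_
    intro g hg h hh hgh
    have hgh : g = t h := hgh
    obtain ⟨k, hk, l, hl, hkl⟩ := Submodule.mem_sup.1 hh.2
    have hk : t k = 0 := hk
    have hg2 : g ∈ W ⊓ (K ⊔ L.map t) := by
      refine ⟨hg.1, Submodule.mem_sup_right ⟨l, hl, ?_⟩⟩
      rw [hgh, ← hkl, map_add, hk, zero_add]
    rwa [hW] at hg2
  let k : (K × L) →ₗ[R] N := K.subtype.coprod L.subtype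
  let φ : (K × L) →ₗ[R] N := K.subtype.coprod (t ∘ₗ L.subtype)
  have hkk : ∀ x : K × L, k x = x.1 + x.2 := fun x => rfl
  have hφφ : ∀ x : K × L, φ x = x.1 + t x.2 := fun x => rfl
  obtain ⟨u, hu⟩ := autInv_extend hN k φ
    (by
      rw [← LinearMap.ker_eq_bot, Submodule.eq_bot_iff]
      rintro ⟨⟨a, ha⟩, ⟨l, hl⟩⟩ h0
      have h0 : a + l = 0 := h0
      have ha : t a = 0 := ha
      have h1 := congrArg t h0
      rw [map_add, ha, zero_add, map_zero] at h1
      have h2 := hLt l hl h1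
      subst h2
      rw [add_zero] at h0
      subst h0
      rfl)
    (by
      rw [← LinearMap.ker_eq_bot, Submodule.eq_bot_iff]
      rintro ⟨⟨a, ha⟩, ⟨l, hl⟩⟩ h0
      have h0 : a + t l = 0 := h0
      have ha : t a = 0 := ha
      have h1 := congrArg t h0
      rw [map_add, ha, zero_add, map_zero] at h1
      have h2 := hdis l hl h1
      subst h2
      rw [map_zero, add_zero] at h0
      subst h0
      rfl)
    (by
      refine ess_mono ?_ hL2
      refine sup_le ?_ ?_
      · intro x hx; exact ⟨(⟨x, hx⟩, 0), by simp [hkk]⟩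
      · intro x hx; exact ⟨(0, ⟨x, hx⟩), by simp [hkk]⟩)
    (by
      refine ess_mono ?_ hess
      refine sup_le ?_ ?_
      · intro x hx; exact ⟨(⟨x, hx⟩, 0), by simp [hφφ]⟩
      · rintro _ ⟨x, hx, rfl⟩; exact ⟨(0, ⟨x, hx⟩), by simp [hφφ]⟩)
  refine ⟨u, u.symm.toLinearMap ∘ₗ t, fun x => by simp, ?_⟩
  refine ess_mono ?_ hL2
  refine sup_le ?_ ?_
  · intro x hx
    have hx : t x = 0 := hx
    simp [hx]
  · intro x hx
    have h1 := hu (0, ⟨x, hx⟩)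
    rw [hkk, hφφ] at h1
    have h2 : u x = t x := by simpa using h1
    have h3 : u.symm (t x) = x := by rw [← h2]; simp
    simp [h3]

theorem comm_aux (sf : SquareFreeMod R N) (p r : N →ₗ[R] N)
    (hp : EssentialSub (LinearMap.ker (p ∘ₗ p - p))) :
    EssentialSub (LinearMap.ker (p ∘ₗ r ∘ₗ (LinearMap.id - p))) := by
  intro L hL
  have e2 := ess_comap (r ∘ₗ (LinearMap.id - p)) hp
  have e := ess_inf hp e2
  apply e
  have hLk : ∀ x ∈ L, p (r (x - p x)) = 0 → x = 0 := by
    intro x hx h0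
    have : x ∈ L ⊓ LinearMap.ker (p ∘ₗ r ∘ₗ (LinearMap.id - p)) := ⟨hx, h0⟩
    rwa [hL] at this
  refine sf_sub sf _ (LinearMap.id - p) (p ∘ₗ r ∘ₗ (LinearMap.id - p)) ?_ ?_ ?_
  · intro x hx h0
    have h0 : x - p x = 0 := h0
    apply hLk x hx.1
    rw [h0, map_zero, map_zero]
  · intro x hx h0
    exact hLk x hx.1 h0
  · rintro g ⟨hg, hg1, -⟩ h ⟨hh, -, hh2⟩ hgh
    have hgh : g - p g = p (r (h - p h)) := hgh
    have hg1 : p (p g) - p g = 0 := hg1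
    have hh2 : p (p (r (h - p h))) - p (r (h - p h)) = 0 := hh2
    have h1 := congrArg p hgh
    rw [map_sub, sub_eq_zero.1 hh2, sub_eq_zero.1 hg1, sub_self] at h1
    rw [← h1] at hgh
    apply hLk g hg
    rw [hgh, map_zero, map_zero]

theorem comm_mod (sf : SquareFreeMod R N) (p r : N →ₗ[R] N)
    (hp : EssentialSub (LinearMap.ker (p ∘ₗ p - p))) :
    EssentialSub (LinearMap.ker (p ∘ₗ r - r ∘ₗ p)) := by
  have h1 := comm_aux sf p r hp
  have h2 := comm_aux sf (LinearMap.id - p) r (by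
    refine ess_mono ?_ hp
    intro x hx
    have hx : p (p x) - p x = 0 := hx
    simp [sub_eq_zero.1 hx])
  refine ess_mono ?_ (ess_inf h1 h2)
  rintro x ⟨hx1, hx2⟩
  have hx1 : p (r (x - p x)) = 0 := hx1
  have hx2 : r (x - (x - p x)) - p (r (x - (x - p x))) = 0 := hx2
  rw [sub_sub_cancel] at hx2
  rw [map_sub, map_sub] at hx1
  change p (r x) - r (p x) = 0
  exact sub_eq_zero.2 ((sub_eq_zero.1 hx1).trans (sub_eq_zero.1 hx2).symm)

theorem kill (hN : AutInvariant R N) (hproj : Module.Projective R N) {U : Type u} [AddCommGroup U]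
    [Module R U] [IsSimpleModule R U] (β : N →ₗ[R] U) (d : N →ₗ[R] N)
    (hd : EssentialSub (LinearMap.ker d)) : ∀ x, β (d x) = 0 := by
  by_contra hcon
  have hne : β ∘ₗ d ≠ 0 := fun h => hcon fun x => LinearMap.congr_fun h x
  have hsurj := LinearMap.surjective_of_ne_zero hne
  obtain ⟨y, hy⟩ := Module.projective_lifting_property (β ∘ₗ d) β hsurj
  have hdy : EssentialSub (LinearMap.ker (d ∘ₗ y)) := ess_comap y hd
  obtain ⟨ψ, hψ⟩ := autInv_extend hN LinearMap.id (LinearMap.id - d ∘ₗ y) Function.injective_id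
    (inj_of_ess _ hdy (by
      intro x hx h0
      have hx : d (y x) = 0 := hx
      simpa [hx] using h0))
    (by simpa using ess_top)
    (by
      refine ess_mono ?_ hdy
      intro x hx
      have hx : d (y x) = 0 := hx
      exact ⟨x, by simp [hx]⟩)
  apply hcon
  intro x
  obtain ⟨z, hz⟩ := ψ.surjective (d x)
  have h1 : ψ z = z - d (y z) := hψ z
  have h2 : β (d (y z)) = β z := LinearMap.congr_fun hy z
  rw [← hz, h1, map_sub, h2, sub_self]

theorem no_square (hN : AutInvariant R N) (sf : SquareFreeMod R N)
    (hproj : Module.Projective R N) {U : Type u} [AddCommGroup U]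
    [Module R U] [IsSimpleModule R U] (α β : N →ₗ[R] U)
    (hαβ : Function.Surjective (α.prod β)) : False := by
  have hα : Function.Surjective α := by
    intro y
    obtain ⟨x, hx⟩ := hαβ (y, 0)
    exact ⟨x, congrArg Prod.fst hx⟩
  have hβ : Function.Surjective β := by
    intro y
    obtain ⟨x, hx⟩ := hαβ (0, y)
    exact ⟨x, congrArg Prod.snd hx⟩
  obtain ⟨t, ht⟩ := Module.projective_lifting_property (α.prod β)
    ((0 : N →ₗ[R] U).prod β) hαβ
  obtain ⟨a, ha⟩ := Module.projective_lifting_property β α hβ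
  obtain ⟨b, hb⟩ := Module.projective_lifting_property α β hα
  have ht1 : ∀ x, α (t x) = 0 := fun x => congrArg Prod.fst (LinearMap.congr_fun ht x)
  have ht2 : ∀ x, β (t x) = β x := fun x => congrArg Prod.snd (LinearMap.congr_fun ht x)
  have ha' : ∀ x, β (a x) = α x := fun x => LinearMap.congr_fun ha x
  have hb' : ∀ x, α (b x) = β x := fun x => LinearMap.congr_fun hb x
  obtain ⟨u, p, hup, hp⟩ := idem_mod hN sf t
  have hcomm : ∀ (γ : N →ₗ[R] U) (r : N →ₗ[R] N) (x : N), γ (p (r x)) = γ (r (p x)) := by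
    intro γ r x
    have := kill hN hproj γ _ (comm_mod sf p r hp) x
    rw [LinearMap.sub_apply, map_sub] at this
    exact sub_eq_zero.1 this
  have h1 : ∀ x, α (p x) = 0 := by
    intro x
    obtain ⟨z, rfl⟩ := u.surjective x
    have := hcomm α u.toLinearMap z
    simp only [LinearEquiv.coe_coe] at this
    rw [this, ← hup, ht1]
  have h2 : ∀ x, β (p (a x)) = 0 := by
    intro x
    rw [hcomm, ha', h1]
  have h3 : ∀ x, β (p x) = 0 := by
    intro x
    have := hcomm β (a ∘ₗ b) x
    simp only [LinearMap.comp_apply] at this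
    rw [h2, ha', hb'] at this
    exact this.symm
  have h4 : ∀ x, β x = 0 := by
    intro x
    have := hcomm β u.toLinearMap x
    simp only [LinearEquiv.coe_coe] at this
    rw [h3, ← hup, ht2] at this
    exact this.symm
  have := IsSimpleModule.nontrivial R U
  obtain ⟨y, hy⟩ := exists_ne (0 : U)
  obtain ⟨x, rfl⟩ := hβ y
  exact hy (h4 x)

theorem sqfree_hom (cyc : ∀ (M : Type u) [AddCommGroup M] [Module R M] (s : N →ₗ[R] M),
      Function.Surjective s → AutInvariant R M) (sf : SquareFreeMod R N)
    (hproj : Module.Projective R N) (hfin : Module.Finite R N) (X Y : Submodule R N)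
    (hXY : X ⊓ Y = ⊥) (f : X →ₗ[R] Y) : f = 0 := by
  have hN := cyc N LinearMap.id Function.surjective_id
  by_contra hf
  obtain ⟨x0, hx0⟩ : ∃ x, f x ≠ 0 := by
    by_contra! h
    exact hf (LinearMap.ext h)
  let K : Submodule R N := (LinearMap.ker f).map X.subtype
  have hK : ∀ x : X, (x : N) ∈ K → f x = 0 := by
    rintro x ⟨y, hy, hyx⟩
    have : y = x := Subtype.ext hyx
    rw [← this]; exact hy
  have hKX : K ≤ X := by
    rintro _ ⟨y, hy, rfl⟩
    exact y.2
  have hXYz : ∀ y : Y, (y : N) ∈ X → y = 0 := by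
    intro y hy
    have : (y : N) ∈ X ⊓ Y := ⟨hy, y.2⟩
    rw [hXY] at this
    exact Subtype.ext this
  let f1 : (X ⧸ LinearMap.ker f) →ₗ[R] N ⧸ K :=
    (LinearMap.ker f).mapQ K X.subtype (Submodule.map_le_iff_le_comap.1 le_rfl)
  let f2 : (X ⧸ LinearMap.ker f) →ₗ[R] N ⧸ K :=
    (LinearMap.ker f).liftQ (K.mkQ ∘ₗ Y.subtype ∘ₗ f) (by
      intro x hx
      have hx : f x = 0 := hx
      simp [hx])
  have hf1 : ∀ x : X, f1 ((LinearMap.ker f).mkQ x) = K.mkQ x := fun x => rfl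
  have hf2 : ∀ x : X, f2 ((LinearMap.ker f).mkQ x) = K.mkQ (f x) := fun x => rfl
  have hz : ∀ x : N, K.mkQ x = 0 ↔ x ∈ K := fun x => Submodule.Quotient.mk_eq_zero K
  have hz2 : ∀ x : X, (LinearMap.ker f).mkQ x = 0 ↔ f x = 0 :=
    fun x => Submodule.Quotient.mk_eq_zero (LinearMap.ker f)
  obtain ⟨p, q, a1, a2, a3, a4, a5, a6⟩ := square_decomp_maps
    (cyc (N ⧸ K) K.mkQ K.mkQ_surjective) f1 f2
    (by
      rw [← LinearMap.ker_eq_bot, Submodule.eq_bot_iff]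
      intro y hy
      obtain ⟨x, rfl⟩ := (LinearMap.ker f).mkQ_surjective y
      rw [LinearMap.mem_ker, hf1, hz] at hy
      rw [hz2]
      exact hK x hy)
    (by
      rw [← LinearMap.ker_eq_bot, Submodule.eq_bot_iff]
      intro y hy
      obtain ⟨x, rfl⟩ := (LinearMap.ker f).mkQ_surjective y
      rw [LinearMap.mem_ker, hf2, hz] at hy
      rw [hz2]
      exact hXYz _ (hKX hy))
    (by
      intro g h hgh
      obtain ⟨x, rfl⟩ := (LinearMap.ker f).mkQ_surjective g
      obtain ⟨y, rfl⟩ := (LinearMap.ker f).mkQ_surjective h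
      rw [hf1, hf2, ← sub_eq_zero, ← map_sub, hz] at hgh
      have h1 : ((f y : Y) : N) ∈ X := by
        have := X.sub_mem x.2 (hKX hgh)
        simpa using this
      have h2 := hXYz _ h1
      rw [h2] at hgh
      rw [hz2]
      exact hK x (by simpa using hgh))
  have hne : Nontrivial (LinearMap.range p) := by
    refine ⟨⟨p (f2 ((LinearMap.ker f).mkQ x0)), _, rfl⟩, 0, ?_⟩
    intro h
    have h := congrArg Subtype.val h
    change p (f2 ((LinearMap.ker f).mkQ x0)) = 0 at h
    rw [a6, hf1, hz] at h
    exact hx0 (hK _ h)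
  have hfp : Module.Finite R (LinearMap.range p) :=
    Module.Finite.of_surjective p.rangeRestrict p.surjective_rangeRestrict
  obtain ⟨m, hm⟩ := IsCoatomic.exists_coatom (Submodule R (LinearMap.range p))
  have hsim : IsSimpleModule R (LinearMap.range p ⧸ m) := isSimpleModule_iff_isCoatom.2 hm
  refine no_square hN sf hproj (m.mkQ ∘ₗ p.rangeRestrict ∘ₗ q ∘ₗ K.mkQ)
    (m.mkQ ∘ₗ p.rangeRestrict ∘ₗ K.mkQ) ?_
  rintro ⟨y, z⟩
  obtain ⟨⟨_, y, rfl⟩, rfl⟩ := m.mkQ_surjective y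
  obtain ⟨⟨_, z, rfl⟩, rfl⟩ := m.mkQ_surjective z
  obtain ⟨x, hx⟩ := K.mkQ_surjective (p y + q (p z))
  refine ⟨x, Prod.ext ?_ ?_⟩
  · have h1 : p.rangeRestrict (q (K.mkQ x)) = ⟨p y, y, rfl⟩ :=
      Subtype.ext (by rw [hx]; simp [a2, a3])
    exact congrArg m.mkQ h1
  · have h1 : p.rangeRestrict (K.mkQ x) = ⟨p z, z, rfl⟩ :=
      Subtype.ext (by rw [hx]; simp [a1, a3])
    exact congrArg m.mkQ h1

end sqfree
end CAI

namespace CAI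

section transfer
open MulOpposite

theorem exists_ringEquiv {R : Type u} [Ring R] (e : R) (he : e * e = e)
    (hcen : ∀ r, e * r = r * e) :
    ∃ (S T : Type u) (_ : Ring S) (_ : Ring T) (Φ : R ≃+* S × T), Φ e = (0, 1) := by
  have hf : IsIdempotentElem (1 - e) := IsIdempotentElem.one_sub he
  have he' : IsIdempotentElem e := he
  have hfe : (1 - e) * e = 0 := by rw [sub_mul, he, one_mul, sub_self]
  have hef : e * (1 - e) = 0 := by rw [mul_sub, he, mul_one, sub_self]
  have hcf : ∀ r, (1 - e) * r = r * (1 - e) := fun r => by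
    rw [sub_mul, mul_sub, hcen, one_mul, mul_one]
  have hm : ∀ (g : R) (hg : IsIdempotentElem g), (∀ r, g * r = r * g) → ∀ r,
      g * r ∈ Subsemigroup.corner g := by
    intro g hg hc r
    rw [Subsemigroup.mem_corner_iff hg]
    refine ⟨by rw [← mul_assoc, hg.eq], by rw [hc, mul_assoc, hg.eq]⟩
  have hmul : ∀ (g : R) (hg : IsIdempotentElem g), (∀ r, g * r = r * g) → ∀ r s,
      g * (r * s) = (g * r) * (g * s) := by
    intro g hg hc r s
    rw [mul_assoc, ← mul_assoc r g s, ← hc r, mul_assoc g r s, ← mul_assoc g g, hg.eq]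
  have h1 : ∀ a : hf.Corner, (1 - e) * a.1 = a.1 ∧ e * a.1 = 0 := by
    intro a
    have := ((Subsemigroup.mem_corner_iff hf).1 a.2).1
    refine ⟨this, ?_⟩
    rw [← this, ← mul_assoc, hef, zero_mul]
  have h2 : ∀ a : he'.Corner, e * a.1 = a.1 ∧ (1 - e) * a.1 = 0 := by
    intro a
    have := ((Subsemigroup.mem_corner_iff he').1 a.2).1
    refine ⟨this, ?_⟩
    rw [← this, ← mul_assoc, hfe, zero_mul]
  let Φ : R ≃+* hf.Corner × he'.Corner :=
    { toFun := fun r => (⟨(1 - e) * r, hm _ hf hcf r⟩, ⟨e * r, hm _ he' hcen r⟩)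
      invFun := fun x => x.1.1 + x.2.1
      left_inv := fun r => by
        change (1 - e) * r + e * r = r
        rw [← add_mul, sub_add_cancel, one_mul]
      right_inv := fun x => by
        refine Prod.ext (Subtype.ext ?_) (Subtype.ext ?_)
        · change (1 - e) * (x.1.1 + x.2.1) = x.1.1
          rw [mul_add, (h1 x.1).1, (h2 x.2).2, add_zero]
        · change e * (x.1.1 + x.2.1) = x.2.1
          rw [mul_add, (h1 x.1).2, (h2 x.2).1, zero_add]
      map_mul' := fun r s => by
        refine Prod.ext (Subtype.ext ?_) (Subtype.ext ?_)
        · exact hmul _ hf hcf r s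
        · exact hmul _ he' hcen r s
      map_add' := fun r s => by
        refine Prod.ext (Subtype.ext ?_) (Subtype.ext ?_)
        · exact mul_add _ _ _
        · exact mul_add _ _ _ }
  refine ⟨hf.Corner, he'.Corner, inferInstance, inferInstance, Φ, ?_⟩
  exact Prod.ext (Subtype.ext hfe) (Subtype.ext he)

variable {R S T : Type u} [Ring R] [Ring S] [Ring T] (Φ : R ≃+* S × T)
  (π : Rᵐᵒᵖ →ₗ[Rᵐᵒᵖ] Rᵐᵒᵖ) (hπ : ∀ x, π x = x * op (Φ.symm (0, 1)))

include hπ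

theorem pi_apply (x : Rᵐᵒᵖ) : Φ (unop (π x)) = (0, (Φ (unop x)).2) := by
  rw [hπ]
  simp [Prod.ext_iff]

theorem transfer_ss (h : IsSemisimpleModule Rᵐᵒᵖ (LinearMap.ker π)) : IsSemisimpleRing S := by
  let σ : Rᵐᵒᵖ →+* Sᵐᵒᵖ := RingHom.op ((RingHom.fst S T).comp Φ.toRingHom)
  have hσ : ∀ x, σ x = op (Φ (unop x)).1 := fun x => rfl
  have hs : RingHomSurjective σ := ⟨fun y => ⟨op (Φ.symm (unop y, 0)), by simp [hσ]⟩⟩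
  let l : LinearMap.ker π →ₛₗ[σ] Sᵐᵒᵖ :=
    { toFun := fun x => op (Φ (unop (x : Rᵐᵒᵖ))).1
      map_add' := fun x y => by simp
      map_smul' := fun r x => by simp [hσ] }
  have hl : ∀ x, l x = op (Φ (unop (x : Rᵐᵒᵖ))).1 := fun x => rfl
  have hbij : Function.Bijective l := by
    constructor
    · intro x y hxy
      rw [hl, hl] at hxy
      have hx := pi_apply Φ π hπ x
      have hy := pi_apply Φ π hπ y
      rw [LinearMap.mem_ker.1 x.2] at hx
      rw [LinearMap.mem_ker.1 y.2] at hy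
      have e1 : (Φ (unop (x : Rᵐᵒᵖ))).2 = 0 := by simpa using (congrArg Prod.snd hx).symm
      have e2 : (Φ (unop (y : Rᵐᵒᵖ))).2 = 0 := by simpa using (congrArg Prod.snd hy).symm
      refine Subtype.ext (unop_injective (Φ.injective (Prod.ext (op_injective hxy) ?_)))
      rw [e1, e2]
    · intro y
      refine ⟨⟨op (Φ.symm (unop y, 0)), ?_⟩, by simp [hl]⟩
      rw [LinearMap.mem_ker, hπ, ← op_mul, ← map_mul]
      simp
  have h2 := (LinearMap.isSemisimpleModule_iff_of_bijective l hbij).1 h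
  exact isSemisimpleRing_mulOpposite_iff.1 h2

theorem transfer_hom (h : ∀ (X Y : Submodule Rᵐᵒᵖ (LinearMap.range π)), X ⊓ Y = ⊥ →
      ∀ f : X →ₗ[Rᵐᵒᵖ] Y, f = 0) (X Y : Submodule Tᵐᵒᵖ T) (hXY : X ⊓ Y = ⊥)
    (f : X →ₗ[Tᵐᵒᵖ] Y) : f = 0 := by
  let σ : Rᵐᵒᵖ →+* Tᵐᵒᵖ := RingHom.op ((RingHom.snd S T).comp Φ.toRingHom)
  have hσ : ∀ x, σ x = op (Φ (unop x)).2 := fun x => rfl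
  let θ : LinearMap.range π →ₛₗ[σ] T :=
    { toFun := fun x => (Φ (unop (x : Rᵐᵒᵖ))).2
      map_add' := fun x y => by simp
      map_smul' := fun r x => by simp [hσ] }
  have hθ : ∀ x, θ x = (Φ (unop (x : Rᵐᵒᵖ))).2 := fun x => rfl
  let j : T → LinearMap.range π := fun t => ⟨op (Φ.symm (0, t)), op (Φ.symm (0, t)), by
    rw [hπ, ← op_mul, ← map_mul]
    simp⟩
  have hj : ∀ t, θ (j t) = t := fun t => by simp [hθ, j]
  have hinj : Function.Injective θ := by
    rintro ⟨_, x, rfl⟩ ⟨_, y, rfl⟩ hxy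
    rw [hθ, hθ] at hxy
    refine Subtype.ext (unop_injective (Φ.injective (Prod.ext ?_ hxy)))
    rw [pi_apply Φ π hπ, pi_apply Φ π hπ]
  let X1 : Submodule Rᵐᵒᵖ (LinearMap.range π) := X.comap θ
  let Y1 : Submodule Rᵐᵒᵖ (LinearMap.range π) := Y.comap θ
  let F : X1 →ₗ[Rᵐᵒᵖ] Y1 :=
    { toFun := fun x => ⟨j (f ⟨θ x, x.2⟩), by
        change θ (j _) ∈ Y
        rw [hj]; exact Subtype.property _⟩
      map_add' := fun x y => by
        refine Subtype.ext (hinj ?_)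
        change θ (j _) = θ (j _ + j _)
        rw [map_add, hj, hj, hj, ← Submodule.coe_add, ← map_add]
        congr 2
        exact Subtype.ext (map_add θ _ _)
      map_smul' := fun r x => by
        refine Subtype.ext (hinj ?_)
        change θ (j _) = θ (r • j _)
        rw [map_smulₛₗ, hj, hj, ← Submodule.coe_smul, ← map_smul]
        congr 2
        exact Subtype.ext (map_smulₛₗ θ _ _) }
  have hF := h X1 Y1 (by
    rw [Submodule.eq_bot_iff]
    rintro x ⟨h1, h2⟩
    have h3 : θ x ∈ X ⊓ Y := ⟨h1, h2⟩
    rw [hXY, Submodule.mem_bot] at h3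
    exact hinj (by rw [h3, map_zero])) F
  refine LinearMap.ext fun x => Subtype.ext ?_
  have h1 : (F ⟨j x, by change θ (j x) ∈ X; rw [hj]; exact x.2⟩ : LinearMap.range π) = 0 := by
    rw [hF]; rfl
  have h2 := congrArg θ h1
  rw [map_zero] at h2
  change θ (j _) = 0 at h2
  rw [hj] at h2
  refine Eq.trans ?_ h2
  congr 2
  exact Subtype.ext (hj x).symm

end transfer

section final
open MulOpposite
variable {T : Type u} [Ring T]

theorem hom_sf (h : ∀ (X Y : Submodule Tᵐᵒᵖ T), X ⊓ Y = ⊥ → ∀ f : X →ₗ[Tᵐᵒᵖ] Y, f = 0) :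
    SquareFreeMod Tᵐᵒᵖ T := by
  rintro A B hAB ⟨φ⟩
  have h0 := h A B hAB φ.toLinearMap
  rw [Submodule.eq_bot_iff]
  intro x hx
  have h1 : φ ⟨x, hx⟩ = 0 := LinearMap.congr_fun h0 ⟨x, hx⟩
  have h2 : (⟨x, hx⟩ : A) = 0 := φ.injective (by rw [h1, map_zero])
  exact congrArg Subtype.val h2

theorem hom_idem_aux (h : ∀ (X Y : Submodule Tᵐᵒᵖ T), X ⊓ Y = ⊥ → ∀ f : X →ₗ[Tᵐᵒᵖ] Y, f = 0)
    (t : T) (ht : t * t = t) (s : T) : t * (s * (1 - t)) = 0 := by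
  let lm : T → (T →ₗ[Tᵐᵒᵖ] T) := fun a =>
    { toFun := fun x => a * x
      map_add' := fun x y => mul_add a x y
      map_smul' := fun r x => by simp [mul_assoc] }
  have hlm : ∀ a x, lm a x = a * x := fun a x => rfl
  have h0 := h (LinearMap.range (lm (1 - t))) (LinearMap.range (lm t)) (by
    rw [Submodule.eq_bot_iff]
    rintro _ ⟨⟨x, rfl⟩, ⟨y, hy⟩⟩
    rw [hlm, hlm] at hy
    have h1 := congrArg (t * ·) hy
    simp only [← mul_assoc, ht, mul_sub, mul_one, sub_self, zero_mul] at h1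
    rw [hlm, ← hy, h1]) (LinearMap.codRestrict _
      (lm (t * s) ∘ₗ (LinearMap.range (lm (1 - t))).subtype) (fun x => ⟨s * x, by
        simp [hlm, mul_assoc]⟩))
  have h1 := congrArg Subtype.val (LinearMap.congr_fun h0 ⟨lm (1 - t) 1, 1, rfl⟩)
  change t * s * ((1 - t) * 1) = 0 at h1
  rw [mul_one, mul_assoc] at h1
  exact h1

theorem hom_idem (h : ∀ (X Y : Submodule Tᵐᵒᵖ T), X ⊓ Y = ⊥ → ∀ f : X →ₗ[Tᵐᵒᵖ] Y, f = 0)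
    (t : T) (ht : t * t = t) (s : T) : t * s = s * t := by
  have h1 := hom_idem_aux h t ht s
  have h2 := hom_idem_aux h (1 - t) (IsIdempotentElem.one_sub ht) s
  rw [sub_sub_cancel] at h2
  have e1 : t * s = t * s * t := by
    have : t * (s * (1 - t)) = t * s - t * s * t := by noncomm_ring
    rw [this] at h1
    exact sub_eq_zero.1 h1
  have e2 : s * t = t * s * t := by
    have : (1 - t) * (s * t) = s * t - t * s * t := by noncomm_ring
    rw [this] at h2
    exact sub_eq_zero.1 h2
  rw [e1, ← e2]

end final

theorem main {R : Type u} [Ring R]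
    (hcyc : ∀ (M : Type u) [AddCommGroup M] [Module Rᵐᵒᵖ M],
      (∃ m : M, Submodule.span Rᵐᵒᵖ {m} = ⊤) → AutInvariant Rᵐᵒᵖ M) :
    ∃ (S T : Type u) (_ : Ring S) (_ : Ring T), Nonempty (R ≃+* S × T) ∧ IsSemisimpleRing S ∧
      (∀ (X Y : Submodule Tᵐᵒᵖ T), X ⊓ Y = ⊥ → ∀ f : X →ₗ[Tᵐᵒᵖ] Y, f = 0) := by
  have cyc : ∀ (M : Type u) [AddCommGroup M] [Module Rᵐᵒᵖ M] (s : Rᵐᵒᵖ →ₗ[Rᵐᵒᵖ] M),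
      Function.Surjective s → AutInvariant Rᵐᵒᵖ M := by
    intro M _ _ s hs
    refine hcyc M ⟨s 1, ?_⟩
    rw [Submodule.eq_top_iff']
    intro x
    obtain ⟨r, rfl⟩ := hs x
    rw [Submodule.mem_span_singleton]
    exact ⟨r, by rw [← map_smul, smul_eq_mul, mul_one]⟩
  obtain ⟨π, hππ, hss, hXY, hYX, hsf⟩ := split_main cyc
  have hπ1 : ∀ x, π x = x * π 1 := fun x => by
    rw [← smul_eq_mul, ← map_smul, smul_eq_mul, mul_one]
  have he : π 1 * π 1 = π 1 := by rw [← hπ1, hππ]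
  have hcen : ∀ r, π 1 * r = r * π 1 := by
    intro r
    let rm : Rᵐᵒᵖ →ₗ[Rᵐᵒᵖ] Rᵐᵒᵖ := LinearMap.toSpanSingleton _ _ r
    have hrm : ∀ x, rm x = x * r := fun x => rfl
    have h1 := hXY (π.rangeRestrict ∘ₗ rm ∘ₗ (LinearMap.ker π).subtype)
    have h2 := hYX ((LinearMap.id - π).codRestrict (LinearMap.ker π) (fun x => by simp [hππ]) ∘ₗ
      rm ∘ₗ (LinearMap.range π).subtype)
    have h3 := congrArg Subtype.val (LinearMap.congr_fun h1 ⟨1 - π 1, by simp [hππ]⟩)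
    have h4 := congrArg Subtype.val (LinearMap.congr_fun h2 ⟨π 1, 1, rfl⟩)
    change π ((1 - π 1) * r) = 0 at h3
    change π 1 * r - π (π 1 * r) = 0 at h4
    rw [hπ1 ((1 - π 1) * r), sub_mul, one_mul, sub_mul] at h3
    rw [hπ1 (π 1 * r)] at h4
    exact (sub_eq_zero.1 h4).trans (sub_eq_zero.1 h3).symm
  obtain ⟨S, T, iS, iT, Φ, hΦ⟩ := exists_ringEquiv (MulOpposite.unop (π 1))
    (by rw [← MulOpposite.unop_mul, he])
    (fun r => by
      have := congrArg MulOpposite.unop (hcen (MulOpposite.op r))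
      simpa using this.symm)
  have hπ : ∀ x, π x = x * MulOpposite.op (Φ.symm (0, 1)) := by
    intro x
    rw [← hΦ, RingEquiv.symm_apply_apply, MulOpposite.op_unop]
    exact hπ1 x
  refine ⟨S, T, iS, iT, ⟨Φ⟩, transfer_ss Φ π hπ hss, transfer_hom Φ π hπ ?_⟩
  refine sqfree_hom ?_ hsf ?_ ?_
  · intro M _ _ s hs
    exact cyc M (s ∘ₗ π.rangeRestrict) (hs.comp π.surjective_rangeRestrict)
  · exact Module.Projective.of_split (LinearMap.range π).subtype π.rangeRestrict (by
      ext ⟨_, x, rfl⟩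
      simp [hππ])
  · exact Module.Finite.of_surjective π.rangeRestrict π.surjective_rangeRestrict

end CAI

/-- if every cyclic right `R`-module is automorphism-invariant, then
`R ≅ S × T` with `S` semisimple artinian and `T` right square-free; moreover closed right
ideals of `T` with zero intersection admit only the zero homomorphism between them, and
all idempotents of `T` are central. -/
theorem cyclics_autInvariant_structure {R : Type u} [Ring R]
    (hcyc : ∀ (M : Type u) [AddCommGroup M] [Module Rᵐᵒᵖ M],
      (∃ m : M, Submodule.span Rᵐᵒᵖ {m} = ⊤) → AutInvariant Rᵐᵒᵖ M) :
    ∃ (S T : Type u) (iS : Ring S) (iT : Ring T),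
      (letI := iS; letI := iT; Nonempty (R ≃+* S × T)) ∧
      (letI := iS; IsSemisimpleRing S) ∧
      (letI := iT; SquareFreeMod Tᵐᵒᵖ T) ∧
      (letI := iT; ∀ X Y : Submodule Tᵐᵒᵖ T, ClosedSub X → ClosedSub Y → X ⊓ Y = ⊥ →
        ∀ f : ↥X →ₗ[Tᵐᵒᵖ] ↥Y, f = 0) ∧
      (letI := iT; ∀ t : T, t * t = t → ∀ s : T, t * s = s * t) := by
  obtain ⟨S, T, iS, iT, h1, h2, h3⟩ := CAI.main hcyc
  exact ⟨S, T, iS, iT, h1, h2, CAI.hom_sf h3, fun X Y _ _ hXY f => h3 X Y hXY f,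
    fun t ht s => CAI.hom_idem h3 t ht s⟩
end
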